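/- Let n ≥ 7 and let ψ : B_n → Sym_{2n} be any homomorphism. Then at least one of the following holds: (a) ψ is cyclic; (b) ψ is conjugate to ρ_S × cycl_w for some w ∈ Sym_n; (c) ψ is conjugate to ρ_S × ρ_S; (d) ψ is conjugate to ρ_{Lj} for some j ∈ {1, 2, 3}. -/

import Mathlib

/-- The braid relations on `n-1` generators; generator `i : Fin (n-1)` stands for the
Artin generator `σ_{i+1}` (so the indexing is 0-based). The relations are
`σ_i σ_j = σ_j σ_i` for `|i-j| ≥ 2` and `σ_i σ_j σ_i = σ_j σ_i σ_j` for `|i-j| = 1`. -/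
def braidRels (n : ℕ) : Set (FreeGroup (Fin (n - 1))) :=
  { r | ∃ i j : Fin (n - 1), ((i : ℕ) + 2 ≤ (j : ℕ) ∨ (j : ℕ) + 2 ≤ (i : ℕ)) ∧
      r = FreeGroup.of i * FreeGroup.of j * (FreeGroup.of j * FreeGroup.of i)⁻¹ } ∪
  { r | ∃ i j : Fin (n - 1), (j : ℕ) = (i : ℕ) + 1 ∧
      r = FreeGroup.of i * FreeGroup.of j * FreeGroup.of i *
          (FreeGroup.of j * FreeGroup.of i * FreeGroup.of j)⁻¹ }

/-- The braid group `B_n`, given by the Artin presentation. -/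
abbrev BraidGroup (n : ℕ) := PresentedGroup (braidRels n)

/-- The Artin generator `σ_{i+1}` of the braid group `B_n`, for `i : Fin (n-1)`. -/
def σ {n : ℕ} (i : Fin (n - 1)) : BraidGroup n := PresentedGroup.of i

/-- A homomorphism to the symmetric group `Sym_k = Perm (Fin k)` is transitive if its
image acts transitively on the `k` points. -/
def IsTransitiveHom {G : Type*} [Group G] {k : ℕ} (φ : G →* Equiv.Perm (Fin k)) : Prop :=
  ∀ x y : Fin k, ∃ g : G, φ g x = y

/-- A homomorphism from `B_n` is cyclic if it sends all the generators `σ_1, …, σ_{n-1}`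
to a single element. -/
def IsCyclicHom {n : ℕ} {H : Type*} [Group H] (ψ : BraidGroup n →* H) : Prop :=
  ∀ i j : Fin (n - 1), ψ (σ i) = ψ (σ j)

/-- The image of the generator `σ_{i+1}` under the standard homomorphism
`ρ_S : B_k → Sym_k`: the transposition of the 0-based points `i` and `i+1`
(that is, of the 1-based points `i+1` and `i+2`). -/
def stdGen (k : ℕ) (i : Fin (k - 1)) : Equiv.Perm (Fin k) :=
  Equiv.swap ⟨i, by have := i.isLt; omega⟩ ⟨(i : ℕ) + 1, by have := i.isLt; omega⟩

/-- The transposition `(j, n+j)` (0-based) in `Sym_{2n}`. -/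
def tw (n : ℕ) (j : Fin n) : Equiv.Perm (Fin (2 * n)) :=
  Equiv.swap ⟨j, by have := j.isLt; omega⟩ ⟨n + j, by have := j.isLt; omega⟩

/-- The 4-cycle `(a, b, c, d)` sending `a ↦ b ↦ c ↦ d ↦ a` (for pairwise distinct
points), written as the product of transpositions `(a d)(a c)(a b)`. -/
def cyc4 {m : ℕ} (a b c d : Fin m) : Equiv.Perm (Fin m) :=
  Equiv.swap a d * Equiv.swap a c * Equiv.swap a b

/-- `ρ_{L1}(σ_{i+1})`: the 4-cycle `(i, n+i+1, n+i, i+1)` on the 0-based points of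
`Sym_{2n}`, for `i : Fin (n-1)`. -/
def linL1Gen (n : ℕ) (i : Fin (n - 1)) : Equiv.Perm (Fin (2 * n)) :=
  cyc4 ⟨i, by have := i.isLt; omega⟩ ⟨n + i + 1, by have := i.isLt; omega⟩
    ⟨n + i, by have := i.isLt; omega⟩ ⟨(i : ℕ) + 1, by have := i.isLt; omega⟩

/-- The product `∏_{j < i} (j, n+j)` (0-based) in `Sym_{2n}`. -/
def lowTw (n : ℕ) (i : Fin (n - 1)) : Equiv.Perm (Fin (2 * n)) :=
  ((List.finRange n).map (fun j : Fin n => if (j : ℕ) < (i : ℕ) then tw n j else 1)).prod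

/-- The product `∏_{j ≥ i+2} (j, n+j)` (0-based) in `Sym_{2n}`. -/
def highTw (n : ℕ) (i : Fin (n - 1)) : Equiv.Perm (Fin (2 * n)) :=
  ((List.finRange n).map (fun j : Fin n => if (i : ℕ) + 2 ≤ (j : ℕ) then tw n j else 1)).prod

/-- `ρ_{L2}(σ_{i+1}) = ∏_{j<i}(j, n+j) · (i, n+i+1, n+i, i+1) · ∏_{j≥i+2}(j, n+j)`
(0-based) in `Sym_{2n}`. -/
def linL2Gen (n : ℕ) (i : Fin (n - 1)) : Equiv.Perm (Fin (2 * n)) :=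
  lowTw n i * linL1Gen n i * highTw n i

/-- `ρ_{L3}(σ_{i+1}) = ∏_{j<i}(j, n+j) · (i, n+i+1)(i+1, n+i) · ∏_{j≥i+2}(j, n+j)`
(0-based) in `Sym_{2n}`. -/
def linL3Gen (n : ℕ) (i : Fin (n - 1)) : Equiv.Perm (Fin (2 * n)) :=
  lowTw n i *
    (Equiv.swap ⟨i, by have := i.isLt; omega⟩ ⟨n + i + 1, by have := i.isLt; omega⟩ *
     Equiv.swap ⟨(i : ℕ) + 1, by have := i.isLt; omega⟩ ⟨n + i, by have := i.isLt; omega⟩) *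
  highTw n i

/-- The block-diagonal permutation of `Fin (2n)` acting as `p` on the first `n` points
and as `j ↦ n + q (j - n)` on the last `n` points. The value of the product
homomorphism `φ₁ × φ₂ : G → Sym_{2n}` of `φ₁, φ₂ : G → Sym_n` at `g` is
`dbl n (φ₁ g) (φ₂ g)`. -/
def dbl (n : ℕ) (p q : Equiv.Perm (Fin n)) : Equiv.Perm (Fin (2 * n)) :=
  (finSumFinEquiv.trans (finCongr (two_mul n).symm)).permCongr (Equiv.sumCongr p q)

/-!
Let `δ` be the product of the permutations `S i = ψ(σ_{i+1})`. Conjugation by `δ` shifts the index,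
so `S` extends to an `n`-periodic family `S : ℤ → Perm X`, `|X| = 2 n`, whose relations are
invariant under rotation of the index. The key fact is that at every point of `X` all the `S i`
take the same value, except possibly two with cyclically adjacent indices. Call a point cyclic if
there are no exceptions.

A permutation `S i` has at most `2 n / 3 ≤ n - 3` cycles of length at least three. The `n - 3`
generators `S (i + 2), …, S (i + n - 2)`, which commute with `S i`, permute these cycles in the same
way by Artin's theorem (few points admit only cyclic actions), and then agree on their union. Let
`L i` be the noncyclic part of this union. The key fact follows on `L i ∩ L (i + 1)`, and counting
shows that these intersections cover `X` if `L i` is not empty. Otherwise the `S i` are involutions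
on the noncyclic points, where the action thus factors through `Sym_n`, and an argument of Bochert
produces `3`-cycles in the point stabilizers, in fact all those on a set of `n - 1` letters.

The two exceptional indices at a noncyclic point single out one of `n` letters, equivariantly, so
the noncyclic points cover the standard action with zero, one or two sheets. Zero and one sheet give
the cyclic homomorphisms and `ρ_S × cycl_w`. A double cover is determined by two bits: whether `S i`
interchanges the sheets over the letters it fixes, and whether going from `i` to `i + 1` and back
does. The four choices are `ρ_S × ρ_S` and the three Lin homomorphisms.
-/

/-- A braid sequence of length `m`: elements `s 0, …, s (m - 1)` of a group satisfying the braid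
relations. The terms of index at least `m` are irrelevant; indexing by `ℕ` avoids casts between
the windows of a sequence. -/
structure IsBraidSeq {G : Type*} [Group G] (m : ℕ) (s : ℕ → G) : Prop where
  commute : ∀ i j, i + 2 ≤ j → j < m → Commute (s i) (s j)
  braid : ∀ i, i + 1 < m → s i * s (i + 1) * s i = s (i + 1) * s i * s (i + 1)

namespace IsBraidSeq

variable {G H : Type*} [Group G] [Group H] {m : ℕ} {s : ℕ → G}

theorem map (hs : IsBraidSeq m s) (f : G →* H) : IsBraidSeq m (fun i ↦ f (s i)) where
  commute i j hij hj := (hs.commute i j hij hj).map f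
  braid i hi := by simp only [← map_mul, hs.braid i hi]

theorem window (hs : IsBraidSeq m s) {a k : ℕ} (h : a + k ≤ m) :
    IsBraidSeq k (fun i ↦ s (a + i)) where
  commute i j hij hj := hs.commute _ _ (by omega) (by omega)
  braid i hi := hs.braid _ (by omega)

theorem exists_lift {K : Subgroup G} (hs : IsBraidSeq m s) (hK : ∀ i < m, s i ∈ K) :
    ∃ t : ℕ → K, IsBraidSeq m t ∧ ∀ i < m, (t i : G) = s i := by
  choose t ht using fun i ↦ show ∃ t : K, i < m → (t : G) = s i from
    if h : i < m then ⟨⟨s i, hK i h⟩, fun _ ↦ rfl⟩ else ⟨1, fun h' ↦ (h h').elim⟩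
  refine ⟨t, ⟨fun i j hij hj ↦ Subtype.ext ?_, fun i hi ↦ Subtype.ext ?_⟩, ht⟩
  · simpa only [K.coe_mul, ht i (by omega), ht j hj] using (hs.commute i j hij hj).eq
  · simpa only [K.coe_mul, ht i (by omega), ht (i + 1) hi] using hs.braid i hi

end IsBraidSeq

section Group

variable {G : Type*} [Group G]

theorem eq_of_braid_of_commute {a b : G} (h : a * b * a = b * a * b) (hab : Commute a b) :
    a = b := by
  rw [hab.eq, mul_assoc, mul_assoc] at h
  exact mul_left_cancel (mul_left_cancel h)

theorem mul_left_conj_of_braid {a b : G} (h : a * b * a = b * a * b) :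
    a * b * a * (a * b)⁻¹ = b := by
  rw [h]; group

/-- With `w = x z⁻¹`, conjugation by `x y` fixes `w` on the one hand and sends it to
`y (w y w⁻¹)⁻¹ = 1` on the other. -/
theorem eq_of_braid_of_commute_div {x y z : G} (hxz : Commute x z)
    (hxy : x * y * x = y * x * y) (hyz : y * z * y = z * y * z)
    (hdiv : Commute (y * x⁻¹) (x * z⁻¹)) : x = z := by
  have hwx : Commute (x * z⁻¹) x := (Commute.refl x).mul_left hxz.symm.inv_left
  have hwy : Commute (x * z⁻¹) y := by
    simpa using hdiv.symm.mul_right hwx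
  have conj_eq_one : x * y * (x * z⁻¹) * (x * y)⁻¹ = 1 := by
    have hz : y * z⁻¹ * y⁻¹ = z⁻¹ * y⁻¹ * z := by
      have : y * z * y⁻¹ = z⁻¹ * y * z := by
        rw [mul_inv_eq_iff_eq_mul, mul_assoc, mul_assoc, eq_inv_mul_iff_mul_eq]
        simpa only [mul_assoc] using hyz.symm
      simpa only [mul_inv_rev, inv_inv, mul_assoc] using congrArg (·⁻¹) this
    calc x * y * (x * z⁻¹) * (x * y)⁻¹
        = x * y * x * (x * y)⁻¹ * (x * (y * z⁻¹ * y⁻¹) * x⁻¹) := by group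
      _ = y * (x * z⁻¹ * y * (x * z⁻¹)⁻¹)⁻¹ := by
        rw [mul_left_conj_of_braid hxy, hz]; group
      _ = 1 := by rw [hwy.eq]; group
  rw [← mul_inv_eq_one, ← conj_eq_one, (hwx.symm.mul_left hwy.symm).eq]
  group

end Group

namespace IsBraidSeq

variable {G : Type*} [Group G] {m : ℕ} {s : ℕ → G}

theorem eq_zero_of_eq_succ (hs : IsBraidSeq m s) {i : ℕ} (hi : i + 1 < m) (h : s i = s (i + 1)) :
    ∀ k < m, s k = s 0 := by
  have up : ∀ j, j + 2 < m → s j = s (j + 1) → s (j + 1) = s (j + 2) := fun j hj e ↦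
    eq_of_braid_of_commute (hs.braid (j + 1) hj) (e ▸ hs.commute j (j + 2) le_rfl hj)
  have down : ∀ j, j + 2 < m → s (j + 1) = s (j + 2) → s j = s (j + 1) := fun j hj e ↦
    eq_of_braid_of_commute (hs.braid j (by omega)) (e ▸ hs.commute j (j + 2) le_rfl hj)
  have first : s 0 = s 1 := by
    induction i with
    | zero => exact h
    | succ j ih => exact ih (by omega) (down j hi h)
  have all : ∀ k, k + 1 < m → s k = s (k + 1) := by
    intro k
    induction k with
    | zero => exact fun _ ↦ first
    | succ j ih => exact fun hj ↦ up j hj (ih (by omega))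
  intro k
  induction k with
  | zero => exact fun _ ↦ rfl
  | succ j ih => exact fun hj ↦ (all j hj).symm.trans (ih (by omega))

theorem eq_zero_of_eq_add_two (hs : IsBraidSeq m s) (hm : 4 ≤ m) {i : ℕ} (hi : i + 2 < m)
    (h : s i = s (i + 2)) : ∀ k < m, s k = s 0 := by
  rcases Nat.lt_or_ge (i + 3) m with h3 | h3
  · exact hs.eq_zero_of_eq_succ h3 <| eq_of_braid_of_commute (hs.braid (i + 2) h3) <|
      h ▸ hs.commute i (i + 3) (by omega) h3
  · obtain ⟨j, rfl⟩ : ∃ j, i = j + 1 := ⟨i - 1, by omega⟩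
    exact hs.eq_zero_of_eq_succ (i := j) (by omega) <|
      eq_of_braid_of_commute (hs.braid j (by omega)) <|
        h ▸ hs.commute j (j + 3) (by omega) hi

theorem eq_zero_of_eq_one (hs : IsBraidSeq m s) (hi : s 0 = 1) : ∀ k < m, s k = s 0 := by
  intro k hk
  rcases Nat.eq_zero_or_pos k with rfl | hpos
  · rfl
  · refine hs.eq_zero_of_eq_succ (i := 0) (by omega) ?_ k hk
    exact eq_of_braid_of_commute (hs.braid 0 (by omega)) (hi ▸ Commute.one_left _)

end IsBraidSeq

/-! ### Artin's theorem: few points force a braid action to be cyclic -/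

section Cycles

open Equiv Equiv.Perm

variable {X : Type*}

theorem sameCycle_apply_iff_of_commute {a g : Perm X} (h : Commute a g) {x y : X} :
    a.SameCycle (g x) (g y) ↔ a.SameCycle x y := by
  have hg : g * a * g⁻¹ = a := by rw [← h.eq, mul_inv_cancel_right]
  nth_rw 1 [← hg]
  simp [sameCycle_conj]

theorem commute_of_sameCycle_apply {a g h : Perm X} (hg : Commute a g) (hh : Commute a h)
    (hg' : ∀ x, a.SameCycle x (g x)) (hh' : ∀ x, a.SameCycle x (h x)) : Commute g h := by
  ext x
  obtain ⟨i, hi⟩ := hg' x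
  obtain ⟨j, hj⟩ := hh' x
  calc g (h x) = (g * a ^ j) x := by rw [mul_apply, hj]
    _ = (a ^ j * a ^ i) x := by rw [← (hg.zpow_left j).eq, mul_apply, ← hi, mul_apply]
    _ = (h * a ^ i) x := by
      rw [← zpow_add, add_comm, zpow_add, mul_apply, hj, ← mul_apply, (hh.zpow_left i).eq]
    _ = h (g x) := by rw [mul_apply, hi]

/-- The action of the centralizer of a permutation `a` on the set of cycles of `a` (fixed points
included), encoded as the quotient by `Equiv.Perm.SameCycle`. -/
def centralizerCycleHom (a : Perm X) :
    Subgroup.centralizer {a} →* Perm (Quotient (SameCycle.setoid a)) where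
  toFun g := Quotient.congr g.1 fun _ _ ↦
    (sameCycle_apply_iff_of_commute (Subgroup.mem_centralizer_singleton_iff.1 g.2).symm).symm
  map_one' := by ext ⟨x⟩; rfl
  map_mul' g h := by ext ⟨x⟩; rfl

theorem commute_of_mem_ker_centralizerCycleHom {a : Perm X} {g h : Subgroup.centralizer {a}}
    (hg : g ∈ (centralizerCycleHom a).ker) (hh : h ∈ (centralizerCycleHom a).ker) :
    Commute g h := by
  have same : ∀ k ∈ (centralizerCycleHom a).ker, ∀ x, a.SameCycle x (k.1 x) := fun k hk x ↦
    (Quotient.exact (DFunLike.congr_fun (MonoidHom.mem_ker.1 hk) ⟦x⟧)).symm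
  have comm (k : Subgroup.centralizer {a}) : Commute a k.1 :=
    (Subgroup.mem_centralizer_singleton_iff.1 k.2).symm
  exact Subtype.ext (commute_of_sameCycle_apply (comm g) (comm h) (same g hg) (same h hh)).eq

theorem mul_card_cycles_le [Finite X] {a : Perm X} {k : ℕ}
    (h : ∀ x, ∀ i, 0 < i → i < k → (a ^ i) x ≠ x) :
    k * Nat.card (Quotient (SameCycle.setoid a)) ≤ Nat.card X := by
  have inj (x : X) : Function.Injective fun i : Fin k ↦ (a ^ (i : ℕ)) x := by
    intro i j (hij : (a ^ (i : ℕ)) x = (a ^ (j : ℕ)) x)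
    wlog hlt : i < j generalizing i j
    · by_contra hne
      exact hne (this hij.symm (lt_of_le_of_ne (not_lt.1 hlt) (Ne.symm hne))).symm
    refine (h x (j - i) (by omega) (by omega) ((a ^ (i : ℕ)).injective ?_)).elim
    rw [← mul_apply, ← pow_add, Nat.add_sub_cancel' hlt.le, hij]
  let f (z : Fin k × Quotient (SameCycle.setoid a)) : X := (a ^ (z.1 : ℕ)) z.2.out
  have hf : Function.Injective f := by
    rintro ⟨i, p⟩ ⟨j, q⟩ (hpq : (a ^ (i : ℕ)) p.out = (a ^ (j : ℕ)) q.out)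
    have : a.SameCycle p.out q.out := by
      rw [← sameCycle_pow_left (n := i), ← sameCycle_pow_right (n := j), hpq]
    obtain rfl : p = q := by simpa using Quotient.sound (s := SameCycle.setoid a) this
    rw [inj p.out hpq]
  simpa using Nat.card_le_card_of_injective f hf

end Cycles

/-- Every braid sequence of length `m` of permutations of `Y` is constant. -/
def BraidRigid (m : ℕ) (Y : Type*) : Prop :=
  ∀ t : ℕ → Equiv.Perm Y, IsBraidSeq m t → ∀ i < m, t i = t 0

section Artin

universe u

open Equiv Equiv.Perm MulAction
open scoped Pointwise

variable {X : Type u} {m : ℕ}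

namespace IsBraidSeq

theorem zero_eq_two_of_commute {t : ℕ → Perm X} (ht : IsBraidSeq m t) (hm : 3 ≤ m) {a : Perm X}
    (ha : ∀ i < m, Commute a (t i)) (hrigid : BraidRigid m (Quotient (SameCycle.setoid a))) :
    t 0 = t 2 := by
  obtain ⟨u, hu, hut⟩ := ht.exists_lift fun i hi ↦
    Subgroup.mem_centralizer_singleton_iff.2 (ha i hi).eq.symm
  have ker : ∀ i < m, ∀ j < m, u i * (u j)⁻¹ ∈ (centralizerCycleHom a).ker := fun i hi j hj ↦ by
    rw [MonoidHom.mem_ker, map_mul, map_inv, mul_inv_eq_one]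
    exact (hrigid _ (hu.map _) i hi).trans (hrigid _ (hu.map _) j hj).symm
  have : u 0 = u 2 := eq_of_braid_of_commute_div (hu.commute 0 2 le_rfl hm)
    (hu.braid 0 (by omega)) (hu.braid 1 hm) <|
      commute_of_mem_ker_centralizerCycleHom (ker 1 (by omega) 0 (by omega))
        (ker 0 (by omega) 2 hm)
  rw [← hut 0 (by omega), ← hut 2 hm, this]

theorem exists_restrict {t : ℕ → Perm X} (ht : IsBraidSeq m t) {s : Set X}
    (hs : ∀ i < m, t i ∈ stabilizer (Perm X) s) :
    ∃ u : ℕ → Perm s, IsBraidSeq m u ∧ ∀ i < m, ∀ x : s, (u i x : X) = t i x := by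
  obtain ⟨u, hu, hut⟩ := ht.exists_lift hs
  exact ⟨_, hu.map (toPermHom (stabilizer (Perm X) s) s), fun i hi x ↦ by
    rw [← hut i hi]; rfl⟩

theorem exists_restrict_zero_eq_two [Finite X] {t : ℕ → Perm X} (ht : IsBraidSeq m t) (hm : 3 ≤ m)
    {a : Perm X} (ha : ∀ i < m, Commute a (t i)) {s : Set X} {k : ℕ}
    (has : ∀ g : Perm X, Commute a g → g ∈ stabilizer (Perm X) s)
    (hk : ∀ x ∈ s, ∀ i, 0 < i → i < k → (a ^ i) x ≠ x)
    (hrigid : ∀ Z : Type u, Finite Z → k * Nat.card Z ≤ Nat.card s → BraidRigid m Z) :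
    ∃ u : ℕ → Perm s, IsBraidSeq m u ∧ (∀ i < m, ∀ x : s, (u i x : X) = t i x) ∧ u 0 = u 2 := by
  obtain ⟨u, hu, hut⟩ := ht.exists_restrict fun i hi ↦ has _ (ha i hi)
  let b : Perm s := a.subtypePerm fun x ↦ mem_stabilizer_set.1 (has a (Commute.refl a)) x
  refine ⟨u, hu, hut, hu.zero_eq_two_of_commute hm (a := b) (fun i hi ↦ ?_)
    (hrigid _ inferInstance (mul_card_cycles_le fun x i hi hik h ↦ hk x x.2 i hi hik ?_))⟩
  · ext x
    simpa [b, hut i hi] using DFunLike.congr_fun (ha i hi).eq (x : X)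
  · simpa [b, subtypePerm_pow] using congrArg Subtype.val h

end IsBraidSeq

theorem nonempty_embedding_fin_of_card_le [Finite X] {k : ℕ} (h : Nat.card X ≤ k) :
    Nonempty (X ↪ Fin k) := by
  have := Fintype.ofFinite X
  exact Function.Embedding.nonempty_of_card_le (by simpa using h)

theorem card_fixedBy_add_two_le [Finite X] {a : Perm X} (ha : a ≠ 1) :
    Nat.card (fixedBy X a) + 2 ≤ Nat.card X := by
  obtain ⟨x, hx⟩ : ∃ x, a x ≠ x := by
    by_contra! h
    exact ha (Equiv.ext h)
  have moved : 1 < (fixedBy X a)ᶜ.ncard :=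
    (Set.one_lt_ncard (Set.toFinite _)).2 ⟨x, hx, a x, fun h ↦ hx (a.injective h), Ne.symm hx⟩
  have := Set.ncard_add_ncard_compl (fixedBy X a)
  rw [Nat.card_coe_set_eq]
  omega

theorem braidRigid_of_card_le_two [Finite X] (h : Nat.card X ≤ 2) : BraidRigid m X := by
  classical
  intro t ht i hi
  obtain ⟨e⟩ := nonempty_embedding_fin_of_card_le h
  have comm : ∀ x y : Perm (Fin 2), x * y = y * x := by decide
  rcases Nat.lt_or_ge 1 m with hm | hm
  · refine ht.eq_zero_of_eq_succ hm (viaEmbeddingHom_injective e ?_) i hi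
    exact eq_of_braid_of_commute ((ht.map (viaEmbeddingHom e)).braid 0 hm) (comm _ _)
  · rw [show i = 0 by omega]

namespace IsBraidSeq

variable {t : ℕ → Perm X}

set_option maxRecDepth 100000 in
theorem zero_eq_two_of_card_le_three [Finite X] (ht : IsBraidSeq 3 t) (h : Nat.card X ≤ 3) :
    t 0 = t 2 := by
  classical
  obtain ⟨e⟩ := nonempty_embedding_fin_of_card_le h
  have perm_three : ∀ x y : Perm (Fin 3), x * y * x = y * x * y →
      ∀ z, x * z = z * x → y * z * y = z * y * z → x = z := by decide +kernel
  have := ht.map (viaEmbeddingHom e)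
  exact viaEmbeddingHom_injective e <| perm_three _ _ (this.braid 0 (by norm_num)) _
    (this.commute 0 2 le_rfl (by norm_num)) (this.braid 1 (by norm_num))

set_option maxRecDepth 100000 in
theorem zero_eq_two_of_card_le_four [Finite X] (ht : IsBraidSeq 4 t) (h : Nat.card X ≤ 4) :
    t 0 = t 2 := by
  classical
  obtain ⟨e⟩ := nonempty_embedding_fin_of_card_le h
  have perm_four : ∀ x : Perm (Fin 4), x ≠ 1 → ∀ y, x * y = y * x → ∀ z, x * z = z * x →
      y * z * y = z * y * z → y = z := by decide +kernel
  by_cases h0 : t 0 = 1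
  · exact (ht.eq_zero_of_eq_one h0 2 (by norm_num)).symm
  have he := ht.map (viaEmbeddingHom e)
  have : t 2 = t 3 := viaEmbeddingHom_injective e <| perm_four _
    (fun h1 ↦ h0 (viaEmbeddingHom_injective e (h1.trans (map_one _).symm))) _
    (he.commute 0 2 le_rfl (by norm_num)) _ (he.commute 0 3 (by norm_num) (by norm_num))
    (he.braid 2 (by norm_num))
  exact (ht.eq_zero_of_eq_succ (i := 2) (by norm_num) this 2 (by norm_num)).symm

theorem two_eq_four_of_ne_one [Finite X] (ht : IsBraidSeq (m + 2) t) (hm : 3 ≤ m)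
    (hX : Nat.card X ≤ m + 2) (h0 : t 0 ≠ 1)
    (ih : ∀ Y : Type u, Finite Y → Nat.card Y ≤ m → ∀ u : ℕ → Perm Y, IsBraidSeq m u → u 0 = u 2) :
    t 2 = t 4 := by
  have hw : IsBraidSeq m fun i ↦ t (2 + i) := ht.window (by omega)
  have comm : ∀ i < m, Commute (t 0) (t (2 + i)) := fun i hi ↦
    ht.commute 0 (2 + i) (by omega) (by omega)
  have fixed : ∀ x, t 0 x = x → t 2 x = t 4 x := by
    obtain ⟨u, hu, hut⟩ := hw.exists_restrict (s := fixedBy X (t 0)) fun i hi ↦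
      fixedBy_mem_fixedBy_of_commute (comm i hi)
    intro x hx
    have := card_fixedBy_add_two_le h0
    rw [← hut 0 (by omega) ⟨x, hx⟩, ← hut 2 (by omega) ⟨x, hx⟩,
      ih _ inferInstance (by omega) u hu]
  have rigid (Z : Type u) (_ : Finite Z) (hZ : 2 * Nat.card Z ≤ m + 2) : BraidRigid m Z := by
    rcases Nat.lt_or_ge 2 (Nat.card Z) with h2 | h2
    · exact fun u hu ↦ hu.eq_zero_of_eq_add_two (i := 0) (by omega) (by omega)
        (ih Z inferInstance (by omega) u hu)
    · exact braidRigid_of_card_le_two h2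
  have moved : ∀ x, t 0 x ≠ x → t 2 x = t 4 x := by
    obtain ⟨u, -, hut, hu⟩ := hw.exists_restrict_zero_eq_two hm comm (s := (fixedBy X (t 0))ᶜ)
      (k := 2) (fun g hg ↦ movedBy_mem_fixedBy_of_commute hg)
      (fun x hx i hi hi2 ↦ by simpa [show i = 1 by omega] using hx)
      (fun Z _ hZ ↦ rigid Z inferInstance (hZ.trans ((Finite.card_subtype_le _).trans hX)))
    intro x hx
    rw [← hut 0 (by omega) ⟨x, hx⟩, ← hut 2 (by omega) ⟨x, hx⟩, hu]
  ext x
  by_cases hx : t 0 x = x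
  exacts [fixed x hx, moved x hx]

theorem zero_eq_two_of_card_le [Finite X] (ht : IsBraidSeq m t) (hm : 3 ≤ m)
    (hX : Nat.card X ≤ m) : t 0 = t 2 := by
  induction m using Nat.strong_induction_on generalizing X with
  | _ m ih =>
    obtain rfl | rfl | ⟨k, rfl⟩ : m = 3 ∨ m = 4 ∨ ∃ k, m = k + 3 + 2 := by
      rcases Nat.lt_or_ge m 5 with h | h
      · omega
      · exact .inr (.inr ⟨m - 5, by omega⟩)
    · exact ht.zero_eq_two_of_card_le_three hX
    · exact ht.zero_eq_two_of_card_le_four hX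
    · by_cases h0 : t 0 = 1
      · exact (ht.eq_zero_of_eq_one h0 2 (by omega)).symm
      · have : t 2 = t 4 := ht.two_eq_four_of_ne_one (by omega) hX h0 fun Y _ hY u hu ↦
          ih (k + 3) (by omega) hu (by omega) hY
        exact (ht.eq_zero_of_eq_add_two (by omega) (i := 2) (by omega) this 2 (by omega)).symm

end IsBraidSeq

theorem braidRigid_of_card_le [Finite X] (hm : 4 ≤ m) (hX : Nat.card X ≤ m) : BraidRigid m X :=
  fun _ ht ↦ ht.eq_zero_of_eq_add_two hm (i := 0) (by omega)
    (ht.zero_eq_two_of_card_le (by omega) hX)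

end Artin

/-! ### The cyclic extension of a braid sequence -/

/-- Elements `S i`, `i : ℤ`, with period `n`, that satisfy the braid relations of a cycle of length
`n`, together with an element `δ` that conjugates each `S i` to `S (i + 1)` and is the product of
any `n - 1` consecutive ones. The Artin generators of `B_n` extend to such a family, with `δ` the
dual Garside element; the extra generator makes the relations invariant under rotation. -/
structure IsCyclicBraid {G : Type*} [Group G] (n : ℕ) (S : ℤ → G) (δ : G) : Prop where
  commute : ∀ i j : ℤ, i + 2 ≤ j → j ≤ i + n - 2 → Commute (S i) (S j)
  braid : ∀ i, S i * S (i + 1) * S i = S (i + 1) * S i * S (i + 1)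
  shift : ∀ i, δ * S i = S (i + 1) * δ
  periodic : Function.Periodic S n
  prod_eq : ∀ i : ℤ, ((List.range (n - 1)).map fun k : ℕ ↦ S (i + k)).prod = δ

namespace IsBraidSeq

variable {G : Type*} [Group G] {m : ℕ} {s : ℕ → G}

theorem prod_mul_eq_succ_mul_prod (hs : IsBraidSeq m s) {i k : ℕ} (hik : i + 2 ≤ k) (hk : k ≤ m) :
    ((List.range k).map s).prod * s i = s (i + 1) * ((List.range k).map s).prod := by
  induction k, hik using Nat.le_induction with
  | base =>
    have hcomm : Commute (s (i + 1)) ((List.range i).map s).prod :=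
      Commute.list_prod_right _ _ fun x hx ↦ by
        obtain ⟨j, hj, rfl⟩ := List.mem_map.1 hx
        rw [List.mem_range] at hj
        exact (hs.commute j (i + 1) (by omega) hk).symm
    rw [List.prod_range_succ, List.prod_range_succ]
    calc _ = ((List.range i).map s).prod * (s i * s (i + 1) * s i) := by group
      _ = ((List.range i).map s).prod * s (i + 1) * (s i * s (i + 1)) := by
        rw [hs.braid i hk]; group
      _ = _ := by rw [← hcomm.eq]; group
  | succ k hik ih =>
    rw [List.prod_range_succ, mul_assoc, ← (hs.commute i k hik hk).eq, ← mul_assoc,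
      ih (by omega), mul_assoc]

theorem prod_mul_prod_mul_last {n : ℕ} (hs : IsBraidSeq (n + 1) s) :
    ((List.range (n + 1)).map s).prod * ((List.range (n + 1)).map s).prod * s n =
      s 0 * (((List.range (n + 1)).map s).prod * ((List.range (n + 1)).map s).prod) := by
  set δ := ((List.range (n + 1)).map s).prod
  have shift : δ * ((List.range n).map s).prod =
      ((List.range n).map fun i ↦ s (i + 1)).prod * δ := by
    rw [← mul_inv_eq_iff_eq_mul, ← MulAut.conj_apply, map_list_prod, List.map_map]
    refine congrArg List.prod (List.map_congr_left fun i hi ↦ ?_)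
    rw [List.mem_range] at hi
    rw [Function.comp_apply, MulAut.conj_apply, mul_inv_eq_iff_eq_mul]
    exact hs.prod_mul_eq_succ_mul_prod (by omega) le_rfl
  have first : δ = s 0 * ((List.range n).map fun i ↦ s (i + 1)).prod := List.prod_range_succ' ..
  have last : δ = ((List.range n).map s).prod * s n := List.prod_range_succ ..
  calc δ * δ * s n = s 0 * (((List.range n).map fun i ↦ s (i + 1)).prod * δ) * s n := by
        nth_rw 1 [first]; group
    _ = s 0 * (δ * δ) := by nth_rw 3 [last]; rw [← shift]; group

theorem exists_isCyclicBraid {n : ℕ} (hn : 3 ≤ n) (hs : IsBraidSeq (n - 1) s) :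
    ∃ (S : ℤ → G) (δ : G), IsCyclicBraid n S δ ∧ ∀ k : ℕ, k < n - 1 → S k = s k := by
  obtain ⟨m, rfl⟩ : ∃ m, n = m + 2 := ⟨n - 2, by omega⟩
  rw [show m + 2 - 1 = m + 1 from rfl] at hs ⊢
  set δ := ((List.range (m + 1)).map s).prod with hδ
  let S (i : ℤ) : G := MulAut.conj (δ ^ i) (s 0)
  have conj_S (a i : ℤ) : S (a + i) = MulAut.conj (δ ^ a) (S i) := by
    simp [S, zpow_add]
  have S_eq (k : ℕ) (hk : k < m + 1) : S k = s k := by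
    induction k with
    | zero => simp [S]
    | succ k ih =>
      rw [Nat.cast_succ, add_comm, conj_S, ih (by omega), zpow_one, MulAut.conj_apply,
        hs.prod_mul_eq_succ_mul_prod (by omega) le_rfl, mul_inv_cancel_right]
  have S_add (a : ℤ) (k : ℕ) (hk : k < m + 1) : S (a + k) = MulAut.conj (δ ^ a) (s k) := by
    rw [conj_S, S_eq k hk]
  have S_zero (a : ℤ) : S a = MulAut.conj (δ ^ a) (s 0) := rfl
  have S_succ (a : ℤ) : S (a + 1) = MulAut.conj δ (S a) := by rw [add_comm, conj_S, zpow_one]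
  refine ⟨S, δ, ⟨fun i j hij hj ↦ ?_, fun i ↦ ?_, fun i ↦ ?_, fun i ↦ ?_, fun i ↦ ?_⟩, S_eq⟩
  · obtain ⟨k, rfl⟩ : ∃ k : ℕ, j = i + k := ⟨(j - i).toNat, by omega⟩
    rw [S_add i k (by omega), S_zero]
    exact (hs.commute 0 k (by omega) (by omega)).map (MulAut.conj (δ ^ i))
  · rw [← Nat.cast_one, S_add i 1 (by omega), S_zero]
    simp only [← map_mul, hs.braid 0 (by omega)]
  · rw [S_succ, MulAut.conj_apply, inv_mul_cancel_right]
  · have last : S (m + 2 : ℕ) = s 0 := by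
      have := hs.prod_mul_prod_mul_last
      rw [show ((m + 2 : ℕ) : ℤ) = m + 1 + 1 by push_cast; ring, S_succ, S_succ, S_eq m (by omega)]
      simpa only [MulAut.conj_apply, mul_assoc, mul_inv_rev] using mul_inv_eq_iff_eq_mul.2 this
    rw [conj_S, last, S_zero]
  · have (k : ℕ) (hk : k ∈ List.range (m + 1)) : S (i + k) = MulAut.conj (δ ^ i) (s k) :=
      S_add i k (List.mem_range.1 hk)
    rw [show m + 2 - 1 = m + 1 from rfl, List.map_congr_left this,
      ← Function.comp_def (MulAut.conj (δ ^ i)), ← List.map_map, ← map_list_prod, ← hδ,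
      MulAut.conj_apply, ((Commute.refl δ).zpow_left i).eq, mul_inv_cancel_right]

end IsBraidSeq

/-! ### Points at which many generators agree -/

section Agreement

open Equiv

variable {X : Type*}

/-- The permutations `S a, …, S b` all take the same value at `x`. -/
def AgreeOn (S : ℤ → Perm X) (a b : ℤ) (x : X) : Prop :=
  ∀ i j, a ≤ i → i ≤ b → a ≤ j → j ≤ b → S i x = S j x

/-- All the permutations `S i` take the same value at `x`. The homomorphism defined by `S` is cyclic
precisely when every point is of this kind. -/
def IsCyclicPt (S : ℤ → Perm X) (x : X) : Prop :=
  ∀ i j, S i x = S j x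

/-- Of the `n` permutations `S j, …, S (j + n - 1)`, all but the first and the last take the same
value at `x`. In the standard action on `Fin n` this is how the point `j` is recognised. -/
def HasIndex (n : ℕ) (S : ℤ → Perm X) (j : ℤ) (x : X) : Prop :=
  AgreeOn S (j + 1) (j + n - 2) x

variable {S : ℤ → Perm X} {a b c d : ℤ} {x : X}

theorem AgreeOn.mono (h : AgreeOn S a d x) (hab : a ≤ b) (hcd : c ≤ d) : AgreeOn S b c x :=
  fun i j _ _ _ _ ↦ h i j (by omega) (by omega) (by omega) (by omega)

theorem AgreeOn.union (h : AgreeOn S a c x) (h' : AgreeOn S b d x) (hab : a ≤ b) (hbc : b ≤ c)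
    (hcd : c ≤ d) : AgreeOn S a d x := by
  have apply_eq : ∀ i, a ≤ i → i ≤ d → S i x = S b x := fun i hi hi' ↦ by
    rcases le_or_gt i c with hc | hc
    · exact h i b hi hc hab hbc
    · exact h' i b (by omega) hi' le_rfl (by omega)
  exact fun i j hi hi' hj hj' ↦ (apply_eq i hi hi').trans (apply_eq j hj hj').symm

theorem IsCyclicPt.agreeOn (h : IsCyclicPt S x) (a b : ℤ) : AgreeOn S a b x :=
  fun i j _ _ _ _ ↦ h i j

theorem apply_iff_of_forall_imp [Finite X] {g : Perm X} {p : X → Prop} (h : ∀ x, p x → p (g x))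
    (x : X) : p (g x) ↔ p x :=
  ⟨fun hx ↦ by simpa using Perm.perm_symm_on_of_perm_on_finite (p := p) h hx, h x⟩

theorem prod_apply_iff {α : Type*} (p : X → Prop) (l : List α) (f : α → Perm X)
    (h : ∀ i ∈ l, ∀ x, p (f i x) ↔ p x) (x : X) : p ((l.map f).prod x) ↔ p x := by
  induction l with
  | nil => rfl
  | cons i l ih =>
    rw [List.map_cons, List.prod_cons, Perm.mul_apply, h i (by simp)]
    exact ih fun j hj ↦ h j (by simp [hj])

namespace IsCyclicBraid

variable {n : ℕ} {δ : Perm X}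

theorem isCyclicPt_of_agreeOn (hS : IsCyclicBraid n S δ) (hn : 0 < n)
    (h : AgreeOn S a (a + n - 1) x) : IsCyclicPt S x := by
  intro i j
  obtain ⟨i', hi', hi⟩ := hS.periodic.exists_mem_Ico (by omega) i a
  obtain ⟨j', hj', hj⟩ := hS.periodic.exists_mem_Ico (by omega) j a
  rw [Set.mem_Ico] at hi' hj'
  rw [hi, hj]
  exact h i' j' hi'.1 (by omega) hj'.1 (by omega)

theorem apply_shift (hS : IsCyclicBraid n S δ) (i : ℤ) (x : X) : S (i + 1) (δ x) = δ (S i x) := by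
  rw [← Perm.mul_apply, ← hS.shift, Perm.mul_apply]

theorem agreeOn_shift_iff (hS : IsCyclicBraid n S δ) :
    AgreeOn S (a + 1) (b + 1) (δ x) ↔ AgreeOn S a b x := by
  constructor
  · intro h i k hi hi' hk hk'
    have := h (i + 1) (k + 1) (by omega) (by omega) (by omega) (by omega)
    rwa [hS.apply_shift, hS.apply_shift, δ.apply_eq_iff_eq] at this
  · intro h i k hi hi' hk hk'
    obtain ⟨i, rfl⟩ : ∃ i', i = i' + 1 := ⟨i - 1, by ring⟩
    obtain ⟨k, rfl⟩ : ∃ k', k = k' + 1 := ⟨k - 1, by ring⟩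
    rw [hS.apply_shift, hS.apply_shift, h i k (by omega) (by omega) (by omega) (by omega)]

theorem hasIndex_shift_iff (hS : IsCyclicBraid n S δ) {j : ℤ} :
    HasIndex n S (j + 1) (δ x) ↔ HasIndex n S j x := by
  rw [HasIndex, HasIndex, show j + 1 + n - 2 = j + n - 2 + 1 by ring, hS.agreeOn_shift_iff]

theorem isCyclicPt_shift_iff (hS : IsCyclicBraid n S δ) (hn : 0 < n) :
    IsCyclicPt S (δ x) ↔ IsCyclicPt S x := by
  refine ⟨fun h ↦ hS.isCyclicPt_of_agreeOn hn (a := 0) ?_, fun h ↦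
    hS.isCyclicPt_of_agreeOn hn (a := 0 + 1) ?_⟩
  · exact hS.agreeOn_shift_iff.1 (h.agreeOn _ _)
  · rw [show (0 : ℤ) + 1 + n - 1 = n - 1 + 1 by ring, hS.agreeOn_shift_iff]
    exact h.agreeOn _ _

theorem hasIndex_add_period_iff (hS : IsCyclicBraid n S δ) {j : ℤ} :
    HasIndex n S (j + n) x ↔ HasIndex n S j x := by
  constructor
  · intro h i k hi hi' hk hk'
    rw [← hS.periodic i, ← hS.periodic k]
    exact h _ _ (by omega) (by omega) (by omega) (by omega)
  · intro h i k hi hi' hk hk'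
    rw [← hS.periodic.sub_eq i, ← hS.periodic.sub_eq k]
    exact h _ _ (by omega) (by omega) (by omega) (by omega)

/-- Commuting permutations of the window that agree at `x` agree at their common value there; the
complement of a path on at least four vertices is connected. -/
theorem agreeOn_apply (hS : IsCyclicBraid n S δ) (h : AgreeOn S a b x) (hab : a + 3 ≤ b)
    (hb : b ≤ a + n - 2) {i : ℤ} (hi : a ≤ i) (hi' : i ≤ b) : AgreeOn S a b (S i x) := by
  have far : ∀ k l, a ≤ k → k + 2 ≤ l → l ≤ b → S k (S i x) = S l (S i x) := fun k l hk hkl hl ↦ by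
    rw [h i l hi hi' (by omega) hl, ← Perm.mul_apply, (hS.commute k l hkl (by omega)).eq,
      Perm.mul_apply, h l k (by omega) hl hk (by omega)]
  have eq_first : ∀ k, a ≤ k → k ≤ b → S k (S i x) = S a (S i x) := fun k hk hkb ↦ by
    obtain rfl | rfl | hk2 : k = a ∨ k = a + 1 ∨ a + 2 ≤ k := by omega
    · rfl
    · rw [far (a + 1) (a + 3) (by omega) (by omega) hab, far a (a + 3) le_rfl (by omega) hab]
    · exact (far a k le_rfl hk2 hkb).symm
  exact fun k l hk hk' hl hl' ↦ (eq_first k hk hk').trans (eq_first l hl hl').symm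

theorem agreeOn_apply_iff [Finite X] (hS : IsCyclicBraid n S δ) (hab : a + 3 ≤ b)
    (hb : b ≤ a + n - 2) {i : ℤ} (hi : a ≤ i) (hi' : i ≤ b) :
    AgreeOn S a b (S i x) ↔ AgreeOn S a b x :=
  apply_iff_of_forall_imp (p := AgreeOn S a b)
    (fun _ hx ↦ hS.agreeOn_apply hx hab hb hi hi') x

theorem hasIndex_apply_iff [Finite X] (hS : IsCyclicBraid n S δ) (hn : 6 ≤ n) {i j : ℤ}
    (hi : j + 1 ≤ i) (hi' : i ≤ j + n - 2) : HasIndex n S j (S i x) ↔ HasIndex n S j x :=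
  hS.agreeOn_apply_iff (by omega) (by omega) hi hi'

theorem isCyclicPt_apply_iff [Finite X] (hS : IsCyclicBraid n S δ) (hn : 5 ≤ n) (i : ℤ) :
    IsCyclicPt S (S i x) ↔ IsCyclicPt S x := by
  refine apply_iff_of_forall_imp (fun x hx ↦ hS.isCyclicPt_of_agreeOn (a := i) (by omega) ?_) x
  have first : AgreeOn S i (i + n - 2) (S i x) :=
    hS.agreeOn_apply (hx.agreeOn _ _) (by omega) le_rfl le_rfl (by omega)
  have last : AgreeOn S (i + 1) (i + n - 1) (S i x) := hx i (i + 1) ▸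
    hS.agreeOn_apply (hx.agreeOn _ _) (by omega) (by omega) le_rfl (by omega)
  exact first.union last (by omega) (by omega) (by omega)

/-- On the points where `S (j + 1), …, S (j + n - 1)` agree, say with `t`, their product `δ` is
`t ^ (n - 1)`, so `S (j + 1) δ = δ S j` forces `S j` to agree with `t` as well. -/
theorem isCyclicPt_of_agreeOn_pred (hS : IsCyclicBraid n S δ) (hn : 5 ≤ n) {j : ℤ}
    (h : AgreeOn S (j + 1) (j + n - 1) x) : IsCyclicPt S x := by
  have prod_apply (k : ℕ) (hk : k < n) : ∀ y, AgreeOn S (j + 1) (j + n - 1) y →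
      ((List.range k).map fun k : ℕ ↦ S (j + 1 + k)).prod y = (S (j + 1) ^ k) y := by
    induction k with
    | zero => exact fun _ _ ↦ rfl
    | succ k ih =>
      intro y hy
      rw [List.prod_range_succ, pow_succ, Perm.mul_apply, Perm.mul_apply,
        hy (j + 1 + k) (j + 1) (by omega) (by omega) le_rfl (by omega)]
      exact ih (by omega) _ (hS.agreeOn_apply hy (by omega) (by omega) le_rfl (by omega))
  have apply_δ := prod_apply (n - 1) (by omega)
  rw [hS.prod_eq] at apply_δ
  have hj : S j x = S (j + 1) x := by
    apply δ.injective
    rw [← hS.apply_shift, apply_δ x h, ← Perm.mul_apply, ← pow_succ', pow_succ, Perm.mul_apply,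
      apply_δ _ (hS.agreeOn_apply h (by omega) (by omega) le_rfl (by omega))]
  have eq_succ : ∀ i, j ≤ i → i ≤ j + 1 → S i x = S (j + 1) x := fun i hi hi' ↦ by
    obtain rfl | rfl : i = j ∨ i = j + 1 := by omega
    exacts [hj, rfl]
  have : AgreeOn S j (j + 1) x := fun i k hi hi' hk hk' ↦
    (eq_succ i hi hi').trans (eq_succ k hk hk').symm
  exact hS.isCyclicPt_of_agreeOn (by omega) (this.union h (by omega) le_rfl (by omega))

theorem isCyclicPt_of_hasIndex (hS : IsCyclicBraid n S δ) (hn : 5 ≤ n) {j k : ℤ}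
    (hj : HasIndex n S j x) (hk : HasIndex n S k x) (hjk : j < k) (hkj : k < j + n) :
    IsCyclicPt S x := by
  have near : ∀ {i l : ℤ}, HasIndex n S i x → HasIndex n S l x → i < l → l ≤ i + n - 3 →
      IsCyclicPt S x := fun hi hl h h' ↦
    hS.isCyclicPt_of_agreeOn_pred hn <|
      (AgreeOn.union hi hl (by omega) (by omega) (by omega)).mono le_rfl (by omega)
  rcases le_or_gt k (j + n - 3) with h | h
  · exact near hj hk hjk h
  · exact near hk (hS.hasIndex_add_period_iff.2 hj) (by omega) (by omega)

theorem hasIndex_succ_apply_iff [Finite X] (hS : IsCyclicBraid n S δ) (hn : 6 ≤ n) {j : ℤ} :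
    HasIndex n S (j + 1) (S j x) ↔ HasIndex n S j x := by
  obtain ⟨m, rfl⟩ : ∃ m, n = m + 2 := ⟨n - 2, by omega⟩
  let q := ((List.range m).map fun k : ℕ ↦ S (j + 1 + k)).prod
  have hδ : δ = S j * q := by
    rw [← hS.prod_eq j, show m + 2 - 1 = m + 1 from rfl, List.prod_range_succ']
    simp only [Nat.cast_zero, add_zero, Nat.cast_succ, add_comm, add_left_comm, q]
  have hq (y : X) : HasIndex (m + 2) S j (q y) ↔ HasIndex (m + 2) S j y :=
    prod_apply_iff _ _ _ (fun k hk y ↦ by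
      rw [List.mem_range] at hk
      exact hS.hasIndex_apply_iff hn (by omega) (by omega)) y
  obtain ⟨y, rfl⟩ := q.surjective x
  rw [← Perm.mul_apply, ← hδ, hS.hasIndex_shift_iff, hq]

end IsCyclicBraid

end Agreement

/-! ### Points on long cycles -/

section LongCycles

universe u

open Equiv MulAction
open scoped Pointwise

variable {X : Type u} {S : ℤ → Perm X} {δ : Perm X} {n : ℕ} {i k : ℤ} {x : X}

/-- The points that lie on a cycle of `S i` of length at least three and are not cyclic points of
`S`. -/
def longSet (S : ℤ → Perm X) (i : ℤ) : Set X :=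
  {x | S i (S i x) ≠ x ∧ ¬ IsCyclicPt S x}

theorem ncard_insert_apply_of_mem_longSet (hx : x ∈ longSet S i) :
    ({x, S i x, S i (S i x)} : Set X).ncard = 3 := by
  have hne : S i x ≠ x := fun h ↦ hx.1 (by rw [h, h])
  exact Set.ncard_eq_three.2
    ⟨_, _, _, hne.symm, hx.1.symm, fun h ↦ hne ((S i).injective h).symm, rfl⟩

namespace IsCyclicBraid

theorem isBraidSeq_window {G : Type*} [Group G] {S : ℤ → G} {δ : G} (hS : IsCyclicBraid n S δ)
    (a : ℤ) : IsBraidSeq (n - 1) fun k ↦ S (a + k) where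
  commute i j hij hj := hS.commute _ _ (by omega) (by omega)
  braid i _ := by simpa only [Nat.cast_succ, add_assoc] using hS.braid (a + i)

/-- The `n - 3` permutations `S (i + 2), …, S (i + n - 2)` commute with `S i`, hence act on its at
most `2 n / 3 ≤ n - 3` long cycles, trivially by Artin's theorem. -/
theorem agreeOn_of_apply_apply_ne [Finite X] (hS : IsCyclicBraid n S δ) (hn : 7 ≤ n)
    (hX : Nat.card X ≤ 2 * n) (hx : S i (S i x) ≠ x) : AgreeOn S (i + 2) (i + n - 2) x := by
  have ht : IsBraidSeq (n - 3) fun k ↦ S (i + 2 + k) :=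
    ⟨fun k l hkl hl ↦ (hS.isBraidSeq_window (i + 2)).commute k l hkl (by omega),
      fun k hk ↦ (hS.isBraidSeq_window (i + 2)).braid k (by omega)⟩
  obtain ⟨u, hu, hut, hu2⟩ := ht.exists_restrict_zero_eq_two (a := S i) (k := 3)
    (s := (fixedBy X (S i ^ 2))ᶜ) (by omega) (fun k hk ↦ hS.commute _ _ (by omega) (by omega))
    (fun g hg ↦ movedBy_mem_fixedBy_of_commute (hg.pow_left 2))
    (fun y hy l hl hl3 h ↦ hy <| by
      obtain rfl | rfl : l = 1 ∨ l = 2 := by omega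
      · rw [pow_one] at h
        rw [mem_fixedBy, pow_two, mul_smul, Perm.smul_def, Perm.smul_def, h, h]
      · exact h)
    (fun Z _ hZ ↦ braidRigid_of_card_le (by omega) <| by
      have := Finite.card_subtype_le fun y ↦ y ∈ (fixedBy X (S i ^ 2))ᶜ
      have : 3 * Nat.card Z ≤ Nat.card X := hZ.trans this
      omega)
  have hmem : x ∈ (fixedBy X (S i ^ 2))ᶜ := hx
  have eq_first : ∀ k, i + 2 ≤ k → k ≤ i + n - 2 → S k x = u 0 ⟨x, hmem⟩ := fun k hk hk' ↦ by
    obtain ⟨l, rfl⟩ : ∃ l : ℕ, k = i + 2 + l := ⟨(k - (i + 2)).toNat, by omega⟩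
    rw [← hut l (by omega) ⟨x, hmem⟩,
      hu.eq_zero_of_eq_add_two (i := 0) (by omega) (by omega) hu2 l (by omega)]
  exact fun k l hk hk' hl hl' ↦ (eq_first k hk hk').trans (eq_first l hl hl').symm

theorem isCyclicPt_of_apply_apply_ne [Finite X] (hS : IsCyclicBraid n S δ) (hn : 7 ≤ n)
    (hX : Nat.card X ≤ 2 * n) (hi : S i (S i x) ≠ x) (hk : S k (S k x) ≠ x) (hik : i + 2 ≤ k)
    (hki : k ≤ i + n - 2) : IsCyclicPt S x := by
  have agree := hS.agreeOn_of_apply_apply_ne hn hX hi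
  have long : S (i + 2) (S (i + 2) x) ≠ x := by
    rwa [agree (i + 2) k (by omega) (by omega) hik hki,
      hS.agreeOn_apply agree (by omega) (by omega) hik hki (i + 2) k (by omega) (by omega) hik hki]
  have agree' := hS.agreeOn_of_apply_apply_ne hn hX long
  refine hS.isCyclicPt_of_agreeOn_pred (by omega) (j := i + 1) (AgreeOn.mono
    (agree.union agree' (by omega) (by omega) (by omega)) (by omega) (by omega))

theorem apply_mem_longSet_iff [Finite X] (hS : IsCyclicBraid n S δ) (hn : 5 ≤ n)
    (h : Commute (S i) (S k)) : S k x ∈ longSet S i ↔ x ∈ longSet S i := by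
  have (y : X) : S i (S k y) = S k (S i y) := DFunLike.congr_fun h.eq y
  simp only [longSet, Set.mem_ofPred_eq, hS.isCyclicPt_apply_iff hn, this, ne_eq,
    EmbeddingLike.apply_eq_iff_eq]

theorem shift_mem_longSet_iff (hS : IsCyclicBraid n S δ) (hn : 0 < n) :
    δ x ∈ longSet S (i + 1) ↔ x ∈ longSet S i := by
  simp only [longSet, Set.mem_ofPred_eq, hS.isCyclicPt_shift_iff hn, hS.apply_shift, ne_eq,
    EmbeddingLike.apply_eq_iff_eq]

theorem periodic_longSet (hS : IsCyclicBraid n S δ) : Function.Periodic (longSet S) n :=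
  fun i ↦ by simp only [longSet, hS.periodic i]

theorem image_longSet (hS : IsCyclicBraid n S δ) (hn : 0 < n) (i : ℤ) :
    δ '' longSet S i = longSet S (i + 1) := by
  ext x
  obtain ⟨x, rfl⟩ := δ.surjective x
  rw [hS.shift_mem_longSet_iff hn, δ.injective.mem_set_image]

theorem ncard_longSet (hS : IsCyclicBraid n S δ) (hn : 0 < n) (i : ℤ) :
    (longSet S i).ncard = (longSet S 0).ncard := by
  have : Function.Periodic (fun i ↦ (longSet S i).ncard) 1 := fun i ↦ by
    beta_reduce
    rw [← hS.image_longSet hn, Set.ncard_image_of_injective _ δ.injective]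
  simpa using this.int_mul_eq i

theorem ncard_longSet_inter (hS : IsCyclicBraid n S δ) (hn : 0 < n) (i : ℤ) :
    (longSet S i ∩ longSet S (i + 1)).ncard = (longSet S 0 ∩ longSet S 1).ncard := by
  have : Function.Periodic (fun i ↦ (longSet S i ∩ longSet S (i + 1)).ncard) 1 := fun i ↦ by
    beta_reduce
    rw [← hS.image_longSet hn (i + 1)]
    nth_rw 1 [← hS.image_longSet hn i]
    rw [← Set.image_inter δ.injective, Set.ncard_image_of_injective _ δ.injective]
  simpa using this.int_mul_eq i

theorem notMem_longSet [Finite X] (hS : IsCyclicBraid n S δ) (hn : 7 ≤ n)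
    (hX : Nat.card X ≤ 2 * n) (hi : x ∈ longSet S i) (hik : i + 2 ≤ k) (hki : k ≤ i + n - 2) :
    x ∉ longSet S k :=
  fun hk ↦ hi.2 (hS.isCyclicPt_of_apply_apply_ne hn hX hi.1 hk.1 hik hki)

theorem hasIndex_of_mem_longSet [Finite X] (hS : IsCyclicBraid n S δ) (hn : 7 ≤ n)
    (hX : Nat.card X ≤ 2 * n) (hi : x ∈ longSet S i) (hi' : x ∈ longSet S (i + 1)) :
    HasIndex n S (i + 1) x :=
  ((hS.agreeOn_of_apply_apply_ne hn hX hi.1).union (hS.agreeOn_of_apply_apply_ne hn hX hi'.1)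
    (by omega) (by omega) (by omega)).mono (by omega) (by omega)

theorem ncard_longSet_sdiff [Finite X] (hS : IsCyclicBraid n S δ) (hn : 0 < n) (i : ℤ) :
    (longSet S i \ longSet S (i + 1)).ncard + (longSet S 0 ∩ longSet S 1).ncard =
      (longSet S 0).ncard := by
  rw [← hS.ncard_longSet hn i, ← hS.ncard_longSet_inter hn i, add_comm,
    Set.ncard_inter_add_ncard_sdiff_eq_ncard]

theorem disjoint_longSet_inter [Finite X] (hS : IsCyclicBraid n S δ) (hn : 7 ≤ n)
    (hX : Nat.card X ≤ 2 * n) (i : ℤ) :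
    Disjoint (longSet S (i - 1) ∩ longSet S i) (longSet S i ∩ longSet S (i + 1)) :=
  Set.disjoint_left.2 fun _ hx hx' ↦
    hS.notMem_longSet hn hX hx.1 (by omega) (by omega) hx'.2

theorem two_mul_ncard_longSet_inter_le [Finite X] (hS : IsCyclicBraid n S δ) (hn : 7 ≤ n)
    (hX : Nat.card X ≤ 2 * n) :
    2 * (longSet S 0 ∩ longSet S 1).ncard ≤ (longSet S 0).ncard := by
  have h : (longSet S (0 - 1) ∩ longSet S 0 ∪ longSet S 0 ∩ longSet S (0 + 1)).ncard ≤
      (longSet S 0).ncard :=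
    Set.ncard_le_ncard (Set.union_subset Set.inter_subset_right Set.inter_subset_left)
  have pred := hS.ncard_longSet_inter (by omega) (0 - 1)
  rw [Set.ncard_union_eq (hS.disjoint_longSet_inter hn hX 0)] at h
  rw [sub_add_cancel] at pred
  rw [zero_add] at h
  omega

theorem insert_apply_subset_longSet [Finite X] (hS : IsCyclicBraid n S δ) (hn : 5 ≤ n)
    (hx : x ∈ longSet S i) : {x, S i x, S i (S i x)} ⊆ longSet S i := by
  have mem {y : X} : S i y ∈ longSet S i ↔ y ∈ longSet S i :=
    hS.apply_mem_longSet_iff hn (Commute.refl _)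
  exact Set.insert_subset hx (Set.insert_subset (mem.2 hx)
    (Set.singleton_subset_iff.2 (mem.2 (mem.2 hx))))

theorem injective_longSet_sdiff [Finite X] (hS : IsCyclicBraid n S δ) (hn : 7 ≤ n)
    (hX : Nat.card X ≤ 2 * n) : Function.Injective
      fun z : Σ i : Fin n, ↥(longSet S (i : ℕ) \ longSet S ((i : ℕ) + 1)) ↦ (z.2 : X) := by
  rintro ⟨i, x, hx, hx'⟩ ⟨k, _, hy, hy'⟩ rfl
  obtain rfl : i = k := by
    wlog hik : i < k generalizing i k
    · by_contra hne
      exact hne (this k hy hy' i hx hx' (by omega)).symm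
    obtain h | h | h : (k : ℤ) = (i : ℕ) + 1 ∨ (i : ℕ) + 2 ≤ (k : ℤ) ∧ (k : ℤ) ≤ (i : ℕ) + n - 2 ∨
      (k : ℤ) + 1 = (i : ℕ) + n := by omega
    · exact (hx' (h ▸ hy)).elim
    · exact (hS.notMem_longSet hn hX hx h.1 h.2 hy).elim
    · rw [h, hS.periodic_longSet] at hy'
      exact (hy' hx).elim
  rfl

theorem card_sigma_longSet_sdiff [Finite X] (hS : IsCyclicBraid n S δ) (hn : 0 < n) :
    Nat.card (Σ i : Fin n, ↥(longSet S (i : ℕ) \ longSet S ((i : ℕ) + 1))) =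
      n * ((longSet S 0).ncard - (longSet S 0 ∩ longSet S 1).ncard) := by
  simp only [Nat.card_sigma, Nat.card_coe_set_eq,
    fun i ↦ Nat.eq_sub_of_add_eq (hS.ncard_longSet_sdiff hn i), Finset.sum_const,
    Finset.card_univ, Fintype.card_fin, smul_eq_mul]

theorem braid_apply_mem_longSet_inter [Finite X] (hS : IsCyclicBraid n S δ) (hn : 5 ≤ n)
    (hx : x ∈ longSet S i ∩ longSet S (i + 1)) :
    S i (S (i + 1) (S i x)) ∈ longSet S i ∩ longSet S (i + 1) := by
  have braid (y : X) : S i (S (i + 1) (S i y)) = S (i + 1) (S i (S (i + 1) y)) :=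
    DFunLike.congr_fun (hS.braid i) y
  refine ⟨⟨?_, by simpa only [hS.isCyclicPt_apply_iff hn] using hx.1.2⟩,
    ⟨?_, by simpa only [hS.isCyclicPt_apply_iff hn] using hx.1.2⟩⟩
  · rw [braid x, braid, braid]
    simpa only [ne_eq, EmbeddingLike.apply_eq_iff_eq] using hx.2.1
  · rw [← braid, ← braid]
    simpa only [ne_eq, EmbeddingLike.apply_eq_iff_eq] using hx.1.1

/-- If `S i` had a single long cycle `p, y, S i y`, meeting the one of `S (i + 1)` in `p`, then
`S (i + 1)` would map `y` to `S i y` as well; as it preserves the long cycle of `S (i - 1)`, this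
would meet the one of `S i` in both `y` and `S i y`, or in neither. -/
theorem ncard_longSet_inter_ne_one [Finite X] (hS : IsCyclicBraid n S δ) (hn : 7 ≤ n)
    (hX : Nat.card X ≤ 2 * n) (h3 : (longSet S 0).ncard = 3) :
    (longSet S 0 ∩ longSet S 1).ncard ≠ 1 := by
  intro h1
  have unique (i : ℤ) {x y : X} (hx : x ∈ longSet S i ∩ longSet S (i + 1))
      (hy : y ∈ longSet S i ∩ longSet S (i + 1)) : x = y := by
    obtain ⟨z, hz⟩ := Set.ncard_eq_one.1 ((hS.ncard_longSet_inter (by omega) i).trans h1)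
    rw [hz] at hx hy
    rw [hx, hy]
  obtain ⟨p, hp⟩ : (longSet S 0 ∩ longSet S (0 + 1)).Nonempty :=
    Set.nonempty_of_ncard_ne_zero (by rw [zero_add, h1]; exact one_ne_zero)
  obtain ⟨q, hq⟩ : (longSet S (-1) ∩ longSet S (-1 + 1)).Nonempty :=
    Set.nonempty_of_ncard_ne_zero (by rw [hS.ncard_longSet_inter (by omega), h1]; exact one_ne_zero)
  rw [neg_add_cancel] at hq
  have long : {p, S 0 p, S 0 (S 0 p)} = longSet S 0 := Set.eq_of_subset_of_ncard_le
    (hS.insert_apply_subset_longSet (by omega) hp.1)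
    (by rw [ncard_insert_apply_of_mem_longSet hp.1, h3])
  have apply_ne : S 0 (S 0 p) ≠ S 0 p := fun h ↦ hp.1.1 (by rw [h, (S 0).injective h])
  have apply_succ : S 1 (S 0 p) = S 0 (S 0 p) := by
    have cube : S 0 (S 0 (S 0 p)) = p := by
      have := hS.insert_apply_subset_longSet (by omega)
        (hS.insert_apply_subset_longSet (x := p) (by omega) hp.1 (.inr (.inl rfl)))
          (.inr (.inr rfl))
      rw [← long] at this
      simpa [apply_ne, hp.1.1] using this
    apply (S 0).injective
    rw [cube]
    exact unique 0 (hS.braid_apply_mem_longSet_inter (by omega) hp) hp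
  have mem_iff : S 0 (S 0 p) ∈ longSet S (-1) ↔ S 0 p ∈ longSet S (-1) := by
    rw [← apply_succ]
    exact hS.apply_mem_longSet_iff (by omega) (hS.commute (-1) 1 (by norm_num) (by omega))
  have mem_pred : S 0 p ∈ longSet S (-1) := by
    obtain rfl | rfl | rfl := long.symm ▸ hq.2
    · exact (hS.notMem_longSet hn hX hq.1 (by norm_num) (by omega) hp.2).elim
    · exact hq.1
    · exact mem_iff.1 hq.1
  exact apply_ne <| unique (-1) ⟨mem_iff.2 mem_pred, long ▸ .inr (.inr rfl)⟩
    ⟨mem_pred, long ▸ .inr (.inl rfl)⟩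

/-- Let `r` and `c` be the sizes of `longSet S i` and of its intersection with `longSet S (i + 1)`.
The differences of consecutive long sets are disjoint, so `n (r - c) ≤ 2 n`; as `2 c ≤ r`, only
`(r, c) = (3, 1)` and `(4, 2)` are possible. -/
theorem ncard_longSet_of_nonempty [Finite X] (hS : IsCyclicBraid n S δ) (hn : 7 ≤ n)
    (hX : Nat.card X ≤ 2 * n) (hne : (longSet S 0).Nonempty) :
    (longSet S 0).ncard = 4 ∧ (longSet S 0 ∩ longSet S 1).ncard = 2 := by
  have three_le : 3 ≤ (longSet S 0).ncard := by
    obtain ⟨y, hy⟩ := hne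
    rw [← ncard_insert_apply_of_mem_longSet hy]
    exact Set.ncard_le_ncard (hS.insert_apply_subset_longSet (by omega) hy)
  have hsum : n * ((longSet S 0).ncard - (longSet S 0 ∩ longSet S 1).ncard) ≤ n * 2 := by
    rw [← hS.card_sigma_longSet_sdiff (by omega), mul_comm n 2]
    exact (Nat.card_le_card_of_injective _ (hS.injective_longSet_sdiff hn hX)).trans hX
  have := Nat.le_of_mul_le_mul_left hsum (by omega)
  have := hS.two_mul_ncard_longSet_inter_le hn hX
  have := hS.ncard_longSet_inter_ne_one hn hX
  omega

theorem exists_hasIndex_of_longSet_nonempty [Finite X] (hS : IsCyclicBraid n S δ) (hn : 7 ≤ n)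
    (hX : Nat.card X ≤ 2 * n) (hne : (longSet S 0).Nonempty) (x : X) : ∃ j, HasIndex n S j x := by
  obtain ⟨hr, hc⟩ := hS.ncard_longSet_of_nonempty hn hX hne
  have bijective := (hS.injective_longSet_sdiff hn hX).bijective_of_nat_card_le (by
    rw [hS.card_sigma_longSet_sdiff (by omega), hr, hc]; omega)
  obtain ⟨⟨i, x, hx, -⟩, rfl⟩ := bijective.surjective x
  have union : longSet S ((i : ℕ) - 1) ∩ longSet S (i : ℕ) ∪
      longSet S (i : ℕ) ∩ longSet S ((i : ℕ) + 1) = longSet S (i : ℕ) := by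
    refine Set.eq_of_subset_of_ncard_le
      (Set.union_subset Set.inter_subset_right Set.inter_subset_left) ?_
    have pred := hS.ncard_longSet_inter (by omega) ((i : ℕ) - 1)
    rw [sub_add_cancel] at pred
    rw [Set.ncard_union_eq (hS.disjoint_longSet_inter hn hX _), pred,
      hS.ncard_longSet_inter (by omega), hS.ncard_longSet (by omega), hr, hc]
  obtain hx | hx := union.symm ▸ hx
  · exact ⟨_, hS.hasIndex_of_mem_longSet hn hX hx.1 (by rw [sub_add_cancel]; exact hx.2)⟩
  · exact ⟨_, hS.hasIndex_of_mem_longSet hn hX hx.1 hx.2⟩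

theorem apply_apply_of_longSet_eq_empty [Finite X] (hS : IsCyclicBraid n S δ) (hn : 0 < n)
    (h : ¬ (longSet S 0).Nonempty) (i : ℤ) (hx : ¬ IsCyclicPt S x) : S i (S i x) = x := by
  rw [Set.not_nonempty_iff_eq_empty, ← Set.ncard_eq_zero, ← hS.ncard_longSet hn i,
    Set.ncard_eq_zero] at h
  by_contra hxi
  exact Set.eq_empty_iff_forall_notMem.1 h x ⟨hxi, hx⟩

end IsCyclicBraid

end LongCycles

/-! ### Actions of the symmetric group on small sets -/

section SmallActions

open Equiv

theorem choose_two_le_choose {n k : ℕ} (hk : 2 ≤ k) (hkn : k + 2 ≤ n) :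
    n.choose 2 ≤ n.choose k := by
  wlog h : k ≤ n / 2 generalizing k
  · rw [← Nat.choose_symm (by omega : k ≤ n)]
    exact this (by omega) (by omega) (by omega)
  induction k, hk using Nat.le_induction with
  | base => rfl
  | succ k _ ih =>
    exact (ih (by omega) (by omega)).trans (Nat.choose_le_succ_of_lt_half_left (by omega))

variable {α Y : Type*}

theorem exists_perm_apply_eq_self_and_mem_iff [Finite α] {s t : Finset α} {i : α} (hs : i ∉ s)
    (ht : i ∉ t) (h : s.card = t.card) : ∃ g : Perm α, g i = i ∧ ∀ z, g z ∈ t ↔ z ∈ s := by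
  classical
  have := Fintype.ofFinite α
  let e : s ≃ t := Fintype.equivOfCardEq (by simpa using h)
  have mem_iff (z : α) : e.extendSubtype z ∈ t ↔ z ∈ s :=
    ⟨fun hz ↦ by_contra fun hc ↦ e.extendSubtype_not_mem z hc hz, e.extendSubtype_mem z⟩
  have hi : e.extendSubtype i ∉ t := (mem_iff i).not.2 hs
  refine ⟨swap (e.extendSubtype i) i * e.extendSubtype, by simp, fun z ↦ ?_⟩
  rw [Perm.mul_apply, ← mem_iff, swap_apply_def]
  split_ifs with h₁ h₂
  · simp only [h₁, hi, ht]
  · simp only [h₂, hi, ht]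
  · rfl

theorem factorial_le_of_forall_eq_one [Fintype α] [Finite Y] [MulAction (Perm α) Y]
    {Δ : Finset α} {x : Y}
    (hΔ : ∀ g : Perm α, (∀ d ∈ Δ, g d = d) → g • x = x → g = 1) :
    (Fintype.card α - Δ.card).factorial ≤ Nat.card Y := by
  classical
  have inj : Function.Injective fun g : Perm {a // a ∉ Δ} ↦ Perm.ofSubtype g • x := by
    intro a b hab
    refine (inv_mul_eq_one.1 (Perm.ofSubtype_injective ?_)).symm
    rw [map_one]
    refine hΔ _ (fun d hd ↦ Perm.ofSubtype_apply_of_not_mem _ (not_not.2 hd)) ?_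
    rw [map_mul, map_inv, mul_smul, inv_smul_eq_iff]
    exact hab
  have := Nat.card_le_card_of_injective _ inj
  rwa [Nat.card_eq_fintype_card, Fintype.card_perm, Fintype.card_subtype_compl,
    Fintype.card_coe] at this

variable [DecidableEq α]

/-- The commutator of two permutations whose supports meet in a single point is a `3`-cycle. -/
theorem mul_eq_swap_mul_swap_mul_mul {g h : Perm α} {d : α} (hg : g d ≠ d) (hh : h d ≠ d)
    (hd : ∀ z, z ≠ d → g z = z ∨ h z = z) :
    g * h = swap d (h d) * swap d (g d) * (h * g) := by
  ext z
  simp only [Perm.mul_apply, swap_apply_def]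
  have hgd := hd (g d) hg
  have hhd := hd (h d) hh
  have := hd z
  have := hd (g z)
  have := hd (h z)
  have := g.injective
  have := h.injective
  grind [g.apply_eq_iff_eq, h.apply_eq_iff_eq]

variable [MulAction (Perm α) Y] {i j k l : α} {x : Y}

theorem swap_smul_smul (g : Perm α) (i j : α) (x : Y) :
    swap (g i) (g j) • g • x = g • swap i j • x := by
  rw [smul_smul, smul_smul, mul_swap_eq_swap_mul]

theorem swap_smul_swap_smul (i j : α) (x : Y) : swap i j • swap i j • x = x := by
  rw [smul_smul, swap_mul_self, one_smul]

theorem swap_smul_eq_of_swap_smul_eq (hjk : j ≠ k) (hik : i ≠ k)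
    (h : swap i j • x = swap i k • x) : swap j k • x = swap i j • x := by
  have := swap_smul_smul (swap i j) i k (swap i j • x)
  rwa [swap_smul_swap_smul, swap_apply_left, swap_apply_of_ne_of_ne hik.symm hjk.symm, h,
    swap_smul_swap_smul] at this

/-- Bochert's argument: a minimal set `Δ` that determines the elements of the stabilizer of `x` is
larger than half of `α`, so the stabilizer contains nontrivial permutations supported in `Δ`, and in
`Δᶜ` together with a single point of `Δ`. Their commutator is a `3`-cycle. -/
theorem exists_swap_smul_eq_swap_smul [Fintype α] [Finite Y] (hα : 7 ≤ Fintype.card α)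
    (hY : Nat.card Y ≤ 2 * Fintype.card α) (x : Y) :
    ∃ i j k : α, j ≠ i ∧ k ≠ i ∧ k ≠ j ∧ swap i j • x = swap i k • x := by
  classical
  let IsBase (Δ : Finset α) : Prop := ∀ g : Perm α, (∀ d ∈ Δ, g d = d) → g • x = x → g = 1
  obtain ⟨Δ, hΔ, hmin⟩ := Finset.exists_min_image (Finset.univ.filter IsBase) Finset.card
    ⟨Finset.univ, by simp +contextual [IsBase, Equiv.ext_iff]⟩
  replace hΔ : IsBase Δ := (Finset.mem_filter.1 hΔ).2
  have exists_of_card_lt (D : Finset α) (hD : D.card < Δ.card) :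
      ∃ g : Perm α, (∀ d ∈ D, g d = d) ∧ g • x = x ∧ g ≠ 1 := by
    by_contra! hc
    exact hD.not_ge (hmin D (Finset.mem_filter.2 ⟨Finset.mem_univ D, hc⟩))
  have large : Fintype.card α < 2 * Δ.card := by
    by_contra! hsmall
    obtain ⟨m, hm⟩ : ∃ m, Fintype.card α - Δ.card = m + 4 :=
      ⟨Fintype.card α - Δ.card - 4, by omega⟩
    have h₁ := factorial_le_of_forall_eq_one hΔ
    have h₂ : 6 ≤ (m + 3).factorial := Nat.factorial_le (show 3 ≤ m + 3 by omega)
    rw [hm, Nat.factorial_succ] at h₁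
    have h₃ := Nat.mul_le_mul_left (m + 3 + 1) h₂
    omega
  obtain ⟨g, hgΔ, hgx, hg⟩ := exists_of_card_lt Δᶜ (by rw [Finset.card_compl]; omega)
  obtain ⟨d, hd⟩ : ∃ d, g d ≠ d := by
    by_contra! hc
    exact hg (Equiv.ext hc)
  have hdΔ : d ∈ Δ := by_contra fun hc ↦ hd (hgΔ d (Finset.mem_compl.2 hc))
  obtain ⟨h, hhΔ, hhx, hh⟩ := exists_of_card_lt (Δ.erase d) (Finset.card_erase_lt_of_mem hdΔ)
  have hhd : h d ≠ d := fun e ↦ hh <| hΔ h (fun z hz ↦ by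
    rcases eq_or_ne z d with rfl | hzd
    exacts [e, hhΔ z (Finset.mem_erase.2 ⟨hzd, hz⟩)]) hhx
  have disj (z : α) (hz : z ≠ d) : g z = z ∨ h z = z := by
    by_cases hzΔ : z ∈ Δ
    · exact Or.inr (hhΔ z (Finset.mem_erase.2 ⟨hz, hzΔ⟩))
    · exact Or.inl (hgΔ z (Finset.mem_compl.2 hzΔ))
  refine ⟨d, g d, h d, hd, hhd, fun e ↦ ?_, ?_⟩
  · have := disj (g d) hd
    rw [← e, h.apply_eq_iff_eq, e, g.apply_eq_iff_eq] at this
    tauto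
  · have := congrArg (· • x) (mul_eq_swap_mul_swap_mul_mul hd hhd disj)
    simp only [mul_smul, hgx, hhx] at this
    rw [← swap_smul_swap_smul d (h d) (swap d (g d) • x), ← this]

/-- The points `j` for which some `3`-cycle `(i j k)` fixes `x`. -/
def threeCyclePartners (x : Y) (i : α) : Set α :=
  {j | j ≠ i ∧ ∃ k, k ≠ i ∧ k ≠ j ∧ swap i j • x = swap i k • x}

theorem swap_smul_eq_of_mem_threeCyclePartners (hj : j ∈ threeCyclePartners x i)
    (hl : l ∈ threeCyclePartners x i) : swap i j • x = swap i l • x := by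
  obtain ⟨hji, k, hki, hkj, hjk⟩ := hj
  obtain ⟨hli, m, hmi, hml, hlm⟩ := hl
  by_cases hjl : j = l
  · rw [hjl]
  by_cases hjm : j = m
  · rw [hjm, hlm]
  by_cases hkl : k = l
  · rw [hjk, hkl]
  by_cases hkm : k = m
  · rw [hjk, hlm, hkm]
  -- Conjugating `(i j k)` by the `3`-cycle `c = (i l m)` gives `(l j k)`.
  set c := swap i l * swap l m with hc
  have hcx : c • x = x := by
    rw [hc, mul_smul, swap_smul_eq_of_swap_smul_eq hml.symm hmi.symm hlm,
      swap_smul_swap_smul]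
  have hci : c i = l := by
    rw [hc, Perm.mul_apply, swap_apply_of_ne_of_ne hli.symm hmi.symm, swap_apply_left]
  have hc_fix (z : α) (h₁ : z ≠ i) (h₂ : z ≠ l) (h₃ : z ≠ m) : c z = z := by
    rw [hc, Perm.mul_apply, swap_apply_of_ne_of_ne h₂ h₃, swap_apply_of_ne_of_ne h₁ h₂]
  have hij := swap_smul_smul c i j x
  have hjk' := swap_smul_smul c j k x
  rw [hci, hc_fix j hji hjl hjm, hcx] at hij
  rw [hc_fix j hji hjl hjm, hc_fix k hki hkl hkm, hcx,
    swap_smul_eq_of_swap_smul_eq hkj.symm hki.symm hjk, ← hij] at hjk'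
  rw [swap_comm i j, swap_comm l j] at hjk'
  rw [swap_smul_eq_of_swap_smul_eq hli.symm hjl hjk', swap_comm]

theorem apply_mem_threeCyclePartners_iff (g : Perm α) :
    g j ∈ threeCyclePartners (g • x) (g i) ↔ j ∈ threeCyclePartners x i := by
  rw [threeCyclePartners, threeCyclePartners, Set.mem_ofPred_eq, Set.mem_ofPred_eq,
    g.surjective.exists]
  simp only [g.apply_eq_iff_eq, ne_eq, swap_smul_smul, smul_left_cancel_iff]

/-- The sets of partners of `i` with respect to the various points of `Y` include all sets of a
given size that avoid `i`; as `Y` is small, that size must be close to `Fintype.card α`. -/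
theorem card_le_ncard_threeCyclePartners_add_two [Fintype α] [Finite Y] (hα : 7 ≤ Fintype.card α)
    (hY : Nat.card Y ≤ 2 * Fintype.card α) (h : 2 ≤ (threeCyclePartners x i).ncard) :
    Fintype.card α ≤ (threeCyclePartners x i).ncard + 2 := by
  classical
  have := Fintype.ofFinite Y
  let Q (y : Y) : Finset α := (threeCyclePartners y i).toFinset
  have notMem (y : Y) : i ∉ Q y := fun hi ↦ (Set.mem_toFinset.1 hi).1 rfl
  have hsub : (Finset.univ.erase i).powersetCard (Q x).card ⊆ Finset.univ.image Q := by
    intro E hE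
    obtain ⟨hiE, hcard⟩ := Finset.mem_powersetCard.1 hE
    obtain ⟨g, hgi, hg⟩ := exists_perm_apply_eq_self_and_mem_iff (notMem x)
      (Finset.subset_erase.1 hiE).2 hcard.symm
    refine Finset.mem_image.2 ⟨g • x, Finset.mem_univ _, ?_⟩
    ext z
    obtain ⟨z, rfl⟩ := g.surjective z
    have := apply_mem_threeCyclePartners_iff (x := x) (i := i) (j := z) g
    rw [hgi] at this
    rw [hg, Set.mem_toFinset, Set.mem_toFinset, this]
  have hchoose := (Finset.card_le_card hsub).trans Finset.card_image_le
  rw [Finset.card_powersetCard, Finset.card_erase_of_mem (Finset.mem_univ _), Finset.card_univ,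
    Finset.card_univ] at hchoose
  rw [Set.ncard_eq_toFinset_card'] at h ⊢
  by_contra! hlt
  obtain ⟨m, hm⟩ : ∃ m, Fintype.card α = m + 7 := ⟨Fintype.card α - 7, by omega⟩
  have htwo := choose_two_le_choose h (show _ ≤ m + 6 by omega)
  rw [Nat.card_eq_fintype_card, hm] at hY
  rw [hm] at hchoose
  have := Nat.div_mul_cancel (Nat.even_mul_pred_self (m + 6)).two_dvd
  rw [Nat.choose_two_right] at htwo
  simp only [Q, Nat.add_succ_sub_one] at htwo hchoose this
  nlinarith

theorem exists_forall_swap_smul_eq [Fintype α] [Finite Y] (hα : 7 ≤ Fintype.card α)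
    (hY : Nat.card Y ≤ 2 * Fintype.card α) (x : Y) :
    ∃ j : α, ∃ y : Y, ∀ u v, u ≠ j → v ≠ j → u ≠ v → swap u v • x = y := by
  obtain ⟨i, l, m, hli, hmi, hml, hlm⟩ := exists_swap_smul_eq_swap_smul hα hY x
  have hl : l ∈ threeCyclePartners x i := ⟨hli, m, hmi, hml, hlm⟩
  have hm : m ∈ threeCyclePartners x i := ⟨hmi, l, hli, hml.symm, hlm.symm⟩
  have two_le : 2 ≤ (threeCyclePartners x i).ncard :=
    (Set.ncard_pair hml.symm).symm.le.trans (Set.ncard_le_ncard (Set.pair_subset hl hm))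
  have hcompl : (insert i (threeCyclePartners x i))ᶜ.ncard ≤ 1 := by
    have := card_le_ncard_threeCyclePartners_add_two hα hY two_le
    rw [Set.ncard_compl, Set.ncard_insert_of_notMem fun hi ↦ hi.1 rfl, Nat.card_eq_fintype_card]
    omega
  obtain ⟨j, hj⟩ : ∃ j, ∀ u, u ≠ j → u = i ∨ u ∈ threeCyclePartners x i := by
    have : Nonempty α := ⟨i⟩
    obtain ⟨j, hj⟩ := (Set.ncard_le_one_iff_subset_singleton (Set.toFinite _)).1 hcompl
    exact ⟨j, fun u hu ↦ by_contra fun hc ↦ hu (hj hc)⟩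
  refine ⟨j, swap i l • x, fun u v hu hv huv ↦ ?_⟩
  rcases hj u hu with rfl | hu <;> rcases hj v hv with rfl | hv
  · exact absurd rfl huv
  · exact swap_smul_eq_of_mem_threeCyclePartners hv hl
  · rw [swap_comm]
    exact swap_smul_eq_of_mem_threeCyclePartners hu hl
  · rw [swap_smul_eq_of_swap_smul_eq huv hv.1.symm
      (swap_smul_eq_of_mem_threeCyclePartners hu hv)]
    exact swap_smul_eq_of_mem_threeCyclePartners hu hl

end SmallActions

/-! ### Involutive braid sequences -/

section Coxeter

open Equiv

theorem isBraidSeq_swap {α : Type*} [DecidableEq α] {m : ℕ} {f : ℕ → α}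
    (hf : Set.InjOn f (Set.Iic m)) : IsBraidSeq m fun k ↦ swap (f k) (f (k + 1)) where
  commute i j hij hj := by
    refine (Perm.disjoint_swap_swap ?_).commute
    simp only [List.nodup_cons, List.mem_cons, List.not_mem_nil, or_false, not_or]
    refine ⟨⟨?_, ?_, ?_⟩, ⟨?_, ?_⟩, ?_, not_false, List.nodup_nil⟩ <;>
      exact hf.ne (Set.mem_Iic.2 (by omega)) (Set.mem_Iic.2 (by omega)) (by omega)
  braid i hi := by
    have h₁ : f i ≠ f (i + 1) :=
      hf.ne (Set.mem_Iic.2 (by omega)) (Set.mem_Iic.2 (by omega)) (by omega)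
    have h₂ : f i ≠ f (i + 2) :=
      hf.ne (Set.mem_Iic.2 (by omega)) (Set.mem_Iic.2 (by omega)) (by omega)
    have h₃ : f (i + 1) ≠ f (i + 2) :=
      hf.ne (Set.mem_Iic.2 (by omega)) (Set.mem_Iic.2 (by omega)) (by omega)
    rw [swap_mul_swap_mul_swap h₁ h₂, swap_comm (f i) (f (i + 1)),
      swap_comm (f (i + 1)) (f (i + 2)), swap_mul_swap_mul_swap h₃.symm h₂.symm, swap_comm]

theorem prod_swap_apply_last {α : Type*} [DecidableEq α] (f : ℕ → α) (k : ℕ) :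
    ((List.range k).map fun i ↦ swap (f i) (f (i + 1))).prod (f k) = f 0 := by
  induction k with
  | zero => rfl
  | succ k ih => rw [List.prod_range_succ, Perm.mul_apply, swap_apply_right, ih]

theorem injOn_natCast_zmod (m : ℕ) : Set.InjOn (Nat.cast : ℕ → ZMod (m + 1)) (Set.Iic m) := by
  intro a ha b hb h
  rw [Set.mem_Iic] at ha hb
  rwa [ZMod.natCast_eq_natCast_iff', Nat.mod_eq_of_lt (by omega), Nat.mod_eq_of_lt (by omega)] at h

theorem prod_swap_mul_swap_last_zero (m : ℕ) :
    ((List.range m).map fun i ↦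
        swap ((i + 1 : ℕ) : ZMod (m + 2)) ((i + 1 + 1 : ℕ) : ZMod (m + 2))).prod *
      swap ((m + 1 : ℕ) : ZMod (m + 2)) 0 =
    swap 0 1 * ((List.range m).map fun i ↦
        swap ((i + 1 : ℕ) : ZMod (m + 2)) ((i + 1 + 1 : ℕ) : ZMod (m + 2))).prod := by
  let f (i : ℕ) : ZMod (m + 2) := ((i + 1 : ℕ) : ZMod (m + 2))
  let q := ((List.range m).map fun i ↦ swap (f i) (f (i + 1))).prod
  have q_last : q (f m) = 1 := (prod_swap_apply_last f m).trans (by simp [f])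
  have q_zero : q 0 = 0 := by
    have f_ne (k : ℕ) (hk : k ≤ m) : 0 ≠ f k := fun h ↦ k.succ_ne_zero <|
      injOn_natCast_zmod (m + 1) (Set.mem_Iic.2 (by omega)) (Set.mem_Iic.2 (by omega))
        (h.symm.trans Nat.cast_zero.symm)
    refine (prod_apply_iff (· = (0 : ZMod (m + 2))) _ _ (fun k hk z ↦ ?_) 0).2 rfl
    rw [List.mem_range] at hk
    rw [swap_apply_eq_iff, swap_apply_of_ne_of_ne (f_ne k hk.le) (f_ne (k + 1) hk)]
  change q * swap (f m) 0 = swap 0 1 * q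
  rw [mul_swap_eq_swap_mul, q_last, q_zero, swap_comm]

theorem subgroup_eq_top_of_swap_mem {m : ℕ} {H : Subgroup (Perm (ZMod (m + 1)))}
    (h : ∀ k < m, swap (k : ZMod (m + 1)) ((k + 1 : ℕ) : ZMod (m + 1)) ∈ H) : H = ⊤ := by
  have hle : Submonoid.closure (Set.range fun i : Fin m ↦ swap i.castSucc i.succ) ≤
      H.toSubmonoid := by
    refine Submonoid.closure_le.2 ?_
    rintro _ ⟨i, rfl⟩
    have h₁ : ((i : ℕ) : ZMod (m + 1)) = i.castSucc :=
      ZMod.val_injective _ (by rw [ZMod.val_natCast, Nat.mod_eq_of_lt (by omega)]; rfl)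
    have h₂ : ((i + 1 : ℕ) : ZMod (m + 1)) = i.succ :=
      ZMod.val_injective _ (by rw [ZMod.val_natCast, Nat.mod_eq_of_lt (by omega)]; rfl)
    have := h i i.isLt
    rwa [h₁, h₂] at this
  rw [Perm.mclosure_swap_castSucc_succ] at hle
  exact eq_top_iff.2 fun g _ ↦ hle (Submonoid.mem_top g)

namespace IsBraidSeq

variable {G : Type*} [Group G] {m : ℕ} {t : ℕ → G}

/-- The group generated by `t 0, …, t k` is the union of the cosets `t j ⋯ t k A`, `j ≤ k + 1`, of
the group `A` generated by `t 0, …, t (k - 1)`. -/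
theorem exists_finset_card_le_factorial (ht : IsBraidSeq m t) (hsq : ∀ i < m, t i * t i = 1)
    {k : ℕ} (hk : k ≤ m) : ∃ A : Finset G, A.card ≤ (k + 1).factorial ∧ 1 ∈ A ∧
      ∀ i < k, ∀ g ∈ A, t i * g ∈ A := by
  classical
  induction k with
  | zero => exact ⟨{1}, by simp⟩
  | succ k ih =>
    obtain ⟨A, hA, one_mem, hmul⟩ := ih (by omega)
    let w (j : ℕ) : G := ((List.range (k + 1 - j)).map fun i ↦ t (j + i)).prod
    have w_last : w (k + 1) = 1 := by simp [w]
    have w_eq (j : ℕ) (hj : j ≤ k) : w j = t j * w (j + 1) := by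
      simp only [w, show k + 1 - j = k + 1 - (j + 1) + 1 by omega]
      rw [List.prod_range_succ', add_zero]
      simp only [Nat.succ_eq_add_one, add_assoc, add_comm 1]
    refine ⟨(Finset.range (k + 2)).biUnion fun j ↦ A.image (w j * ·), ?_, ?_, ?_⟩
    · calc _ ≤ (Finset.range (k + 2)).card * (k + 1).factorial :=
            Finset.card_biUnion_le_card_mul _ _ _ fun j _ ↦ Finset.card_image_le.trans hA
        _ = (k + 1 + 1).factorial := by rw [Finset.card_range, Nat.factorial_succ (k + 1)]
    · simp only [Finset.mem_biUnion, Finset.mem_image, Finset.mem_range]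
      exact ⟨k + 1, by omega, 1, one_mem, by rw [w_last, one_mul]⟩
    · intro i hi g hg
      simp only [Finset.mem_biUnion, Finset.mem_image, Finset.mem_range] at hg ⊢
      obtain ⟨j, hj, a, ha, rfl⟩ := hg
      obtain hij | rfl | rfl | hij : i + 2 ≤ j ∨ j = i + 1 ∨ i = j ∨ j + 1 ≤ i := by omega
      · refine ⟨j, hj, t i * a, hmul i (by omega) a ha, ?_⟩
        have : Commute (t i) (w j) := Commute.list_prod_right _ _ fun x hx ↦ by
          obtain ⟨l, hl, rfl⟩ := List.mem_map.1 hx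
          rw [List.mem_range] at hl
          exact ht.commute i (j + l) (by omega) (by omega)
        rw [← mul_assoc, ← mul_assoc, this.eq]
      · exact ⟨i, by omega, a, ha, by rw [w_eq i (by omega), mul_assoc]⟩
      · exact ⟨i + 1, by omega, a, ha, by
          rw [w_eq i (by omega), ← mul_assoc, ← mul_assoc, hsq i (by omega), one_mul]⟩
      · obtain ⟨l, rfl⟩ : ∃ l, i = j + l + 1 := ⟨i - j - 1, by omega⟩
        refine ⟨j, hj, t (j + l) * a, hmul _ (by omega) a ha, ?_⟩
        have := (ht.window (a := j) (k := k + 1 - j) (by omega)).prod_mul_eq_succ_mul_prod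
          (i := l) (k := k + 1 - j) (by omega) le_rfl
        rw [← mul_assoc, ← mul_assoc, add_assoc, ← this]

theorem exists_monoidHom_perm (ht : IsBraidSeq m t) (hsq : ∀ i < m, t i * t i = 1) :
    ∃ φ : Perm (ZMod (m + 1)) →* G,
      ∀ k < m, φ (swap (k : ZMod (m + 1)) ((k + 1 : ℕ) : ZMod (m + 1))) = t k := by
  let r (k : ℕ) : Perm (ZMod (m + 1)) := swap (k : ZMod (m + 1)) ((k + 1 : ℕ) : ZMod (m + 1))
  have hr : IsBraidSeq m r := isBraidSeq_swap (injOn_natCast_zmod m)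
  let u (k : ℕ) : Perm (ZMod (m + 1)) × G := (r k, t k)
  have hu : IsBraidSeq m u :=
    ⟨fun i j hij hj ↦ Prod.ext (hr.commute i j hij hj) (ht.commute i j hij hj),
      fun i hi ↦ Prod.ext (hr.braid i hi) (ht.braid i hi)⟩
  have husq (k : ℕ) (hk : k < m) : u k * u k = 1 := Prod.ext (swap_mul_self _ _) (hsq k hk)
  obtain ⟨A, hA, one_mem, hmul⟩ := hu.exists_finset_card_le_factorial husq le_rfl
  let Γ : Subgroup (Perm (ZMod (m + 1)) × G) := Subgroup.closure (u '' Set.Iio m)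
  have mem_Γ (k : ℕ) (hk : k < m) : u k ∈ Γ := Subgroup.subset_closure ⟨k, hk, rfl⟩
  have subset_A (g : Γ) : g.1 ∈ A := by
    refine Subgroup.closure_induction_left (p := fun g _ ↦ g ∈ A) one_mem ?_ ?_ g.2
    · rintro _ ⟨k, hk, rfl⟩ y _ hy
      exact hmul k hk y hy
    · rintro _ ⟨k, hk, rfl⟩ y _ hy
      rw [inv_eq_of_mul_eq_one_left (husq k hk)]
      exact hmul k hk y hy
  have inj : Function.Injective fun g : Γ ↦ (⟨g, subset_A g⟩ : A) := fun a b hab ↦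
    Subtype.ext (congrArg (fun g : A ↦ g.1) hab)
  have : Finite Γ := Finite.of_injective _ inj
  let f : Γ →* Perm (ZMod (m + 1)) := (MonoidHom.fst _ _).comp Γ.subtype
  have hsurj : Function.Surjective f := MonoidHom.range_eq_top.1 <|
    subgroup_eq_top_of_swap_mem fun k hk ↦ ⟨⟨u k, mem_Γ k hk⟩, rfl⟩
  have hcard : Nat.card Γ ≤ Nat.card (Perm (ZMod (m + 1))) := by
    rw [Nat.card_perm, Nat.card_zmod]
    exact (Nat.card_le_card_of_injective _ inj).trans (by simpa using hA)
  let e : Γ ≃* Perm (ZMod (m + 1)) :=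
    MulEquiv.ofBijective f (hsurj.bijective_of_nat_card_le hcard)
  refine ⟨((MonoidHom.snd _ _).comp Γ.subtype).comp e.symm.toMonoidHom, fun k hk ↦ ?_⟩
  have : e.symm (r k) = ⟨u k, mem_Γ k hk⟩ := e.symm_apply_eq.2 rfl
  exact congrArg (fun g : Γ ↦ g.1.2) this

end IsBraidSeq

end Coxeter

/-! ### Every point has an index -/

section Covering

open Equiv MulAction
open scoped Pointwise

namespace IsCyclicBraid

variable {n : ℕ}

theorem exists_monoidHom_perm {G : Type*} [Group G] {S : ℤ → G} {δ : G}
    (hS : IsCyclicBraid n S δ) (hn : 2 ≤ n) (hsq : ∀ i, S i * S i = 1) :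
    ∃ φ : Perm (ZMod n) →* G, ∀ k : ℤ, φ (swap (k : ZMod n) ((k + 1 : ℤ) : ZMod n)) = S k := by
  obtain ⟨m, rfl⟩ : ∃ m, n = m + 2 := ⟨n - 2, by omega⟩
  have hwin : IsBraidSeq (m + 1) fun k : ℕ ↦ S k := by
    simpa only [zero_add, Nat.add_one_sub_one] using hS.isBraidSeq_window 0
  obtain ⟨φ, hφ⟩ := hwin.exists_monoidHom_perm fun i _ ↦ hsq i
  have hφ_last : φ (swap ((m + 1 : ℕ) : ZMod (m + 2)) 0) = S (m + 1 : ℕ) := by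
    -- `q S (m + 1) = δ = S 0 q` for the product `q` of `S 1, …, S m`.
    let q := ((List.range m).map fun i ↦
      swap ((i + 1 : ℕ) : ZMod (m + 2)) ((i + 1 + 1 : ℕ) : ZMod (m + 2))).prod
    have hφq : φ q = ((List.range m).map fun k : ℕ ↦ S (k + 1 : ℕ)).prod := by
      rw [map_list_prod, List.map_map]
      refine congrArg List.prod (List.map_congr_left fun k hk ↦ ?_)
      exact hφ (k + 1) (by rw [List.mem_range] at hk; omega)
    have first : δ = S 0 * φ q := by
      rw [← hS.prod_eq 0, hφq]
      simpa using List.prod_range_succ' (fun k : ℕ ↦ S k) m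
    have last : δ = φ q * S (m + 1 : ℕ) := by
      rw [← hS.prod_eq 1, hφq]
      simpa [add_comm] using List.prod_range_succ (fun k : ℕ ↦ S (1 + k)) m
    have conj := congrArg φ (prod_swap_mul_swap_last_zero m)
    rw [map_mul, map_mul] at conj
    refine mul_left_cancel (a := φ q) (conj.trans ?_)
    rw [← last, first]
    exact congrArg (· * φ q) (by simpa using hφ 0 (by omega))
  refine ⟨φ, fun k ↦ ?_⟩
  have hφ_lt (k : ℕ) (hk : k < m + 2) :
      φ (swap (k : ZMod (m + 2)) ((k + 1 : ℕ) : ZMod (m + 2))) = S k := by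
    obtain hk | rfl : k < m + 1 ∨ k = m + 1 := by omega
    · exact hφ k hk
    · rw [ZMod.natCast_self, hφ_last]
  have h := hφ_lt (k : ZMod (m + 2)).val (ZMod.val_lt _)
  rw [Nat.cast_add, ZMod.natCast_zmod_val, Nat.cast_one] at h
  rw [Int.cast_add, Int.cast_one, h, ZMod.val_intCast, Int.emod_def, mul_comm]
  exact hS.periodic.sub_int_mul_eq _

theorem exists_restrict {X : Type*} {S : ℤ → Perm X} {δ : Perm X} (hS : IsCyclicBraid n S δ)
    {s : Set X} (hs : ∀ i, S i ∈ stabilizer (Perm X) s) :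
    ∃ (T : ℤ → Perm s) (ε : Perm s), IsCyclicBraid n T ε ∧ ∀ i (x : s), (T i x : X) = S i x := by
  have hδ : δ ∈ stabilizer (Perm X) s := by
    rw [← hS.prod_eq 0]
    refine Subgroup.list_prod_mem _ fun g hg ↦ ?_
    obtain ⟨k, -, rfl⟩ := List.mem_map.1 hg
    exact hs _
  let f := toPermHom (stabilizer (Perm X) s) s
  refine ⟨fun i ↦ f ⟨S i, hs i⟩, f ⟨δ, hδ⟩,
    ⟨fun i j hij hj ↦ ?_, fun i ↦ ?_, fun i ↦ ?_, fun i ↦ ?_, fun i ↦ ?_⟩, fun _ _ ↦ rfl⟩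
  · exact Commute.map (Subtype.ext (hS.commute i j hij hj).eq) f
  · simp only [← map_mul]
    exact congrArg f (Subtype.ext (hS.braid i))
  · simp only [← map_mul]
    exact congrArg f (Subtype.ext (hS.shift i))
  · exact congrArg f (Subtype.ext (hS.periodic i))
  · rw [← Function.comp_def f, ← List.map_map, ← map_list_prod]
    refine congrArg f (Subtype.ext ?_)
    rw [Subgroup.val_list_prod, List.map_map]
    exact hS.prod_eq i

theorem exists_hasIndex_of_involutive {X : Type*} [Finite X] {S : ℤ → Perm X} {δ : Perm X}
    (hS : IsCyclicBraid n S δ) (hn : 7 ≤ n) (hX : Nat.card X ≤ 2 * n)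
    (hsq : ∀ i x, S i (S i x) = x) (x : X) : ∃ j, HasIndex n S j x := by
  obtain ⟨φ, hφ⟩ := hS.exists_monoidHom_perm (by omega) fun i ↦ Equiv.ext (hsq i)
  have : NeZero n := ⟨by omega⟩
  let := MulAction.compHom X φ
  obtain ⟨j, y, hy⟩ := exists_forall_swap_smul_eq (α := ZMod n)
    (by rwa [ZMod.card]) (by rwa [ZMod.card]) x
  have apply_eq (i : ℤ) (hi : (j.val : ℤ) + 1 ≤ i) (hi' : i ≤ j.val + n - 2) : S i x = y := by
    have cast_ne (a b : ℤ) (hab : a < b) (hb : b < a + n) : (b : ZMod n) ≠ a := fun h ↦ by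
      rw [eq_comm, ZMod.intCast_eq_intCast_iff_dvd_sub] at h
      have := Int.le_of_dvd (by omega) h
      omega
    have j_eq : ((j.val : ℤ) : ZMod n) = j := by simp
    rw [← hφ i]
    refine hy _ _ ?_ ?_ (cast_ne i (i + 1) (by omega) (by omega)).symm <;> rw [← j_eq] <;>
      exact cast_ne _ _ (by omega) (by omega)
  exact ⟨j.val, fun i k hi hi' hk hk' ↦ (apply_eq i hi hi').trans (apply_eq k hk hk').symm⟩

theorem exists_hasIndex {X : Type*} [Finite X] {S : ℤ → Perm X} {δ : Perm X}
    (hS : IsCyclicBraid n S δ) (hn : 7 ≤ n) (hX : Nat.card X ≤ 2 * n) (x : X) :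
    ∃ j, HasIndex n S j x := by
  by_cases hne : (longSet S 0).Nonempty
  · exact hS.exists_hasIndex_of_longSet_nonempty hn hX hne x
  by_cases hx : IsCyclicPt S x
  · exact ⟨0, hx.agreeOn _ _⟩
  obtain ⟨T, ε, hT, hTS⟩ := hS.exists_restrict (s := {x | ¬ IsCyclicPt S x}) fun i ↦
    (mem_stabilizer_set).2 fun y ↦ not_congr (hS.isCyclicPt_apply_iff (by omega) i)
  obtain ⟨j, hj⟩ := hT.exists_hasIndex_of_involutive hn ((Finite.card_subtype_le _).trans hX)
    (fun i y ↦ Subtype.ext (by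
      rw [hTS, hTS, hS.apply_apply_of_longSet_eq_empty (by omega) hne i y.2])) ⟨x, hx⟩
  refine ⟨j, fun i k hi hi' hk hk' ↦ ?_⟩
  rw [← hTS i ⟨x, hx⟩, ← hTS k ⟨x, hx⟩, hj i k hi hi' hk hk']

end IsCyclicBraid

end Covering

/-! ### The index of a point -/

section Index

open Equiv
open scoped Pointwise

/-- The permutations `t 0, …, t (m - 1)` lift the standard action on `Fin (m + 1)` along `π`, and
those of them which fix `π y` take the same value at `y`. -/
structure IsStdCover {Y : Type*} (m : ℕ) (t : ℕ → Perm Y) (π : Y → Fin (m + 1)) : Prop where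
  map_apply : ∀ (i : Fin m) y, π (t i y) = swap i.castSucc i.succ (π y)
  apply_eq_apply : ∀ (i k : Fin m) y, π y ≠ i.castSucc → π y ≠ i.succ → π y ≠ k.castSucc →
    π y ≠ k.succ → t i y = t k y

/-- The points at which the permutations `S i` do not all take the same value. -/
def nonCyclicPts {X : Type*} (S : ℤ → Perm X) : Set X :=
  {x | ¬ IsCyclicPt S x}

namespace IsCyclicBraid

section

variable {X : Type*} {S : ℤ → Perm X} {δ : Perm X} {n : ℕ} {x : X} {i j k : ℤ}

theorem exists_natCast_hasIndex (hS : IsCyclicBraid n S δ) (hn : 0 < n) (h : HasIndex n S j x) :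
    ∃ k : ℕ, k < n ∧ HasIndex n S k x := by
  have periodic : Function.Periodic (fun j ↦ HasIndex n S j x) (n : ℤ) :=
    fun _ ↦ propext hS.hasIndex_add_period_iff
  obtain ⟨k, hk, hjk⟩ := periodic.exists_mem_Ico₀ (by omega) j
  lift k to ℕ using hk.1
  exact ⟨k, by exact_mod_cast hk.2, hjk.mp h⟩

theorem eq_of_hasIndex (hS : IsCyclicBraid n S δ) (hn : 5 ≤ n) (hx : ¬ IsCyclicPt S x) {j k : ℕ}
    (hj : j < n) (hk : k < n) (h : HasIndex n S j x) (h' : HasIndex n S k x) : j = k := by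
  by_contra hjk
  rcases Nat.lt_or_gt_of_ne hjk with hlt | hlt
  · exact hx (hS.isCyclicPt_of_hasIndex hn h h' (by omega) (by omega))
  · exact hx (hS.isCyclicPt_of_hasIndex hn h' h (by omega) (by omega))

/-- Both `i` and `i + n` name the generator `S i`, and one of them lies in the window of `j`. -/
theorem exists_mem_window (hS : IsCyclicBraid n S δ) (hi : 0 ≤ i) (hin : i + 1 < n) (hj : 0 ≤ j)
    (hjn : j < n) (hij : j ≠ i) (hij' : j ≠ i + 1) :
    ∃ k, j + 1 ≤ k ∧ k ≤ j + n - 2 ∧ S k = S i := by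
  rcases lt_or_gt_of_ne hij with h | h
  · exact ⟨i, by omega, by omega, rfl⟩
  · exact ⟨i + n, by omega, by omega, hS.periodic i⟩

theorem hasIndex_swap_apply_iff [Finite X] {m : ℕ} (hS : IsCyclicBraid (m + 1) S δ) (hm : 5 ≤ m)
    (i : Fin m) {k : Fin (m + 1)} (hk : k ≠ i.succ) :
    HasIndex (m + 1) S (swap i.castSucc i.succ k) (S i x) ↔ HasIndex (m + 1) S k x := by
  rcases eq_or_ne k i.castSucc with rfl | hk'
  · rw [swap_apply_left]
    simpa using hS.hasIndex_succ_apply_iff (j := i) (x := x) (by omega)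
  · rw [swap_apply_of_ne_of_ne hk' hk]
    rw [ne_eq, Fin.ext_iff] at hk hk'
    simp only [Fin.val_succ, Fin.val_castSucc] at hk hk'
    obtain ⟨l, hl, hl', hli⟩ := hS.exists_mem_window (i := i) (j := k) (by omega) (by omega)
      (by omega) (by omega) (by omega) (by omega)
    rw [← hli]
    exact hS.hasIndex_apply_iff (by omega) hl hl'

end

theorem exists_isStdCover {X : Type*} [Finite X] {S : ℤ → Perm X} {δ : Perm X} {m : ℕ}
    (hS : IsCyclicBraid (m + 1) S δ) (hm : 6 ≤ m) (hX : Nat.card X ≤ 2 * (m + 1)) :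
    ∃ t : ℕ → Perm (nonCyclicPts S), IsBraidSeq m t ∧ (∀ i y, (t i y : X) = S i y) ∧
      ∃ π, IsStdCover m t π := by
  obtain ⟨T, ε, hT, hTS⟩ := hS.exists_restrict (s := nonCyclicPts S) fun i ↦
    MulAction.mem_stabilizer_set.2 fun y ↦ not_congr (hS.isCyclicPt_apply_iff (by omega) i)
  have exists_index (x : X) : ∃ k : Fin (m + 1), HasIndex (m + 1) S k x := by
    obtain ⟨j, hj⟩ := hS.exists_hasIndex (by omega) hX x
    obtain ⟨k, hk, hkx⟩ := hS.exists_natCast_hasIndex (by omega) hj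
    exact ⟨⟨k, hk⟩, hkx⟩
  choose idx hasIndex_idx using exists_index
  have idx_eq {x : X} (hx : ¬ IsCyclicPt S x) {k : Fin (m + 1)} (hk : HasIndex (m + 1) S k x) :
      idx x = k :=
    Fin.ext (hS.eq_of_hasIndex (by omega) hx (idx x).2 k.2 (hasIndex_idx x) hk)
  refine ⟨fun i ↦ T i, by simpa using hT.isBraidSeq_window 0, fun i y ↦ hTS i y, fun y ↦ idx y,
    fun i y ↦ ?_, fun i k y hi hi' hk hk' ↦ Subtype.ext ?_⟩
  · have hy : ¬ IsCyclicPt S (S i y) := (hS.isCyclicPt_apply_iff (by omega) i).not.2 y.2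
    rw [hTS]
    by_cases hsucc : idx y = i.succ
    · rw [hsucc, swap_apply_right]
      by_contra hne
      have hne' : swap i.castSucc i.succ (idx (S i y)) ≠ i.succ := by
        rwa [ne_eq, swap_apply_eq_iff, swap_apply_right]
      have := hasIndex_idx (S i y)
      rw [← swap_apply_self i.castSucc i.succ (idx (S i y)),
        hS.hasIndex_swap_apply_iff (by omega) i hne'] at this
      exact hne' ((idx_eq y.2 this).symm.trans hsucc)
    · exact idx_eq hy ((hS.hasIndex_swap_apply_iff (by omega) i hsucc).2 (hasIndex_idx y))
  · rw [ne_eq, Fin.ext_iff] at hi hi' hk hk'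
    simp only [Fin.val_succ, Fin.val_castSucc] at hi hi' hk hk'
    obtain ⟨a, ha, ha', hai⟩ := hS.exists_mem_window (i := i) (j := idx y) (by omega) (by omega)
      (by omega) (by omega) (by omega) (by omega)
    obtain ⟨b, hb, hb', hbk⟩ := hS.exists_mem_window (i := k) (j := idx y) (by omega) (by omega)
      (by omega) (by omega) (by omega) (by omega)
    rw [hTS, hTS, ← hai, ← hbk]
    exact hasIndex_idx y a b ha ha' hb hb'

end IsCyclicBraid

end Index

/-! ### Lifts of the standard action -/

section Lifts

open Equiv

variable {m : ℕ}

theorem exists_trivialization {Y : Type*} {t : ℕ → Perm Y} {π : Y → Fin (m + 1)}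
    (hπ : ∀ (i : Fin m) y, π (t i y) = swap i.castSucc i.succ (π y)) :
    ∃ e : Fin (m + 1) × {y // π y = 0} ≃ Y, (∀ j b, π (e (j, b)) = j) ∧
      ∀ (i : Fin m) b, t i (e (i.castSucc, b)) = e (i.succ, b) := by
  let f (z : Fin (m + 1) × {y // π y = 0}) : Y :=
    Fin.induction (motive := fun _ ↦ Y) (z.2 : Y) (fun i y ↦ t i y) z.1
  have f_succ (i : Fin m) (b) : f (i.succ, b) = t i (f (i.castSucc, b)) := Fin.induction_succ ..
  have π_f (j b) : π (f (j, b)) = j := by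
    induction j using Fin.induction with
    | zero => exact b.2
    | succ i ih => rw [f_succ, hπ, ih, swap_apply_left]
  have injective (j) : Function.Injective fun b ↦ f (j, b) := by
    induction j using Fin.induction with
    | zero => exact Subtype.val_injective
    | succ i ih => simpa only [f_succ, Function.comp_def] using (t i).injective.comp ih
  have surjective (j) : ∀ y, π y = j → ∃ b, f (j, b) = y := by
    induction j using Fin.induction with
    | zero => exact fun y hy ↦ ⟨⟨y, hy⟩, rfl⟩
    | succ i ih =>
      intro y hy
      obtain ⟨z, rfl⟩ := (t i).surjective y
      rw [hπ, swap_apply_eq_iff, swap_apply_right] at hy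
      obtain ⟨b, rfl⟩ := ih z hy
      exact ⟨b, f_succ i b⟩
  have bijective : Function.Bijective f := by
    refine ⟨fun ⟨j, b⟩ ⟨k, c⟩ h ↦ ?_, fun y ↦ ?_⟩
    · obtain rfl : j = k := by rw [← π_f j b, h, π_f]
      rw [injective j h]
    · obtain ⟨b, hb⟩ := surjective (π y) y rfl
      exact ⟨_, hb⟩
  exact ⟨Equiv.ofBijective f bijective, π_f, fun i b ↦ (f_succ i b).symm⟩

theorem card_eq_mul_card_fiber {Y : Type*} {t : ℕ → Perm Y} {π : Y → Fin (m + 1)}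
    (hπ : ∀ (i : Fin m) y, π (t i y) = swap i.castSucc i.succ (π y)) :
    Nat.card Y = (m + 1) * Nat.card {y // π y = 0} := by
  obtain ⟨e, -, -⟩ := exists_trivialization hπ
  rw [← Nat.card_congr e, Nat.card_prod, Nat.card_fin]

theorem exists_equiv_fin_of_card_fiber_eq_one {Y : Type*} {t : ℕ → Perm Y} {π : Y → Fin (m + 1)}
    (hπ : ∀ (i : Fin m) y, π (t i y) = swap i.castSucc i.succ (π y))
    (hcard : Nat.card {y // π y = 0} = 1) :
    ∃ e : Fin (m + 1) ≃ Y, ∀ (i : Fin m) j, t i (e j) = e (swap i.castSucc i.succ j) := by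
  obtain ⟨e, π_e, -⟩ := exists_trivialization hπ
  have := (Nat.card_eq_one_iff_unique.1 hcard).1
  have π_injective : Function.Injective π := fun y y' h ↦ by
    obtain ⟨⟨j, b⟩, rfl⟩ := e.surjective y
    obtain ⟨⟨k, c⟩, rfl⟩ := e.surjective y'
    rw [π_e, π_e] at h
    rw [h, Subsingleton.elim b c]
  obtain ⟨b⟩ := (Nat.card_eq_one_iff_unique.1 hcard).2
  let f : Fin (m + 1) ≃ Y :=
    (Equiv.ofBijective π ⟨π_injective, fun j ↦ ⟨e (j, b), π_e j b⟩⟩).symm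
  have π_f : ∀ j, π (f j) = j := f.symm_apply_apply
  exact ⟨f, fun i j ↦ π_injective (by rw [hπ, π_f, π_f])⟩

/-- The lift of the transposition of `i` and `i + 1` to `Fin (m + 1) × Bool` that preserves the
sheet from `i` to `i + 1`, changes it by `ε` from `i + 1` to `i`, and by `τ` at the other points. -/
def twistedGen (τ ε : Bool) (i : Fin m) (z : Fin (m + 1) × Bool) : Fin (m + 1) × Bool :=
  (swap i.castSucc i.succ z.1,
    xor z.2 (if z.1 = i.castSucc then false else if z.1 = i.succ then ε else τ))

/-- The permutations `s i` are simultaneously conjugate to the `twistedGen τ ε i`. -/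
def IsTwistedDouble {X : Type*} (τ ε : Bool) (s : Fin m → Perm X) : Prop :=
  ∃ e : Fin (m + 1) × Bool ≃ X, ∀ i z, s i (e z) = e (twistedGen τ ε i z)

theorem IsTwistedDouble.exists_conj {X : Type*} {τ ε : Bool} {s t : Fin m → Perm X}
    (hs : IsTwistedDouble τ ε s) (ht : IsTwistedDouble τ ε t) :
    ∃ u : Perm X, ∀ i, s i = u * t i * u⁻¹ := by
  obtain ⟨e, he⟩ := hs
  obtain ⟨f, hf⟩ := ht
  refine ⟨f.symm.trans e, fun i ↦ eq_mul_inv_iff_mul_eq.2 (Equiv.ext fun x ↦ ?_)⟩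
  obtain ⟨z, rfl⟩ := f.surjective x
  simp [he, hf]

theorem swap_apply_of_val_ne {i : Fin m} {j : Fin (m + 1)} (h : (j : ℕ) ≠ i)
    (h' : (j : ℕ) ≠ i + 1) : swap i.castSucc i.succ j = j :=
  swap_apply_of_ne_of_ne (mt Fin.ext_iff.1 h) (mt Fin.ext_iff.1 h')

/-- Over `j` the permutation `t i` changes the sheet of the double cover `e` if `c i j` holds. The
last condition normalises `e`. -/
structure IsSheetChange {Y : Type*} (t : ℕ → Perm Y) (e : Fin (m + 1) × Bool ≃ Y)
    (c : Fin m → Fin (m + 1) → Bool) : Prop where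
  apply_eq : ∀ (i : Fin m) j b, t i (e (j, b)) = e (swap i.castSucc i.succ j, xor b (c i j))
  apply_castSucc : ∀ i, c i i.castSucc = false

namespace IsSheetChange

variable {Y : Type*} {t : ℕ → Perm Y} {e : Fin (m + 1) × Bool ≃ Y} {c : Fin m → Fin (m + 1) → Bool}

theorem succ_eq_castSucc (hc : IsSheetChange t e c) (ht : IsBraidSeq m t) {i k : Fin m}
    (hik : i + 2 ≤ (k : ℕ) ∨ k + 2 ≤ (i : ℕ)) : c i k.succ = c i k.castSucc := by
  have comm : t i * t k = t k * t i := by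
    rcases hik with h | h
    · exact ht.commute i k h k.2
    · exact (ht.commute k i h i.2).symm
  have castSucc_fix : swap i.castSucc i.succ k.castSucc = k.castSucc :=
    swap_apply_of_val_ne (by simp; omega) (by simp; omega)
  have succ_fix : swap i.castSucc i.succ k.succ = k.succ :=
    swap_apply_of_val_ne (by simp; omega) (by simp; omega)
  have := congrArg (fun g : Perm Y ↦ g (e (k.castSucc, false))) comm
  simpa [hc.apply_eq, hc.apply_castSucc, castSucc_fix, succ_fix] using this

theorem succ_eq_succ (hc : IsSheetChange t e c) (ht : IsBraidSeq m t) {i k : Fin m}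
    (hik : (k : ℕ) = i + 1) (hτ : c k i.castSucc = c i k.succ) : c i i.succ = c k k.succ := by
  have braid : t i * t k * t i = t k * t i * t k := by
    simpa only [hik] using ht.braid i (hik ▸ k.2)
  have succ_i : i.succ = k.castSucc := Fin.ext hik.symm
  have k_fix : swap k.castSucc k.succ i.castSucc = i.castSucc :=
    swap_apply_of_val_ne (by simp; omega) (by simp; omega)
  have i_fix : swap i.castSucc k.castSucc k.succ = k.succ :=
    succ_i ▸ swap_apply_of_val_ne (by simp; omega) (by simp; omega)
  have := congrArg (fun g : Perm Y ↦ g (e (i.succ, false))) braid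
  simpa [hc.apply_eq, hc.apply_castSucc, succ_i, k_fix, i_fix, hτ,
    Bool.xor_comm (c i k.castSucc)] using this

end IsSheetChange

theorem exists_far (hm : 4 ≤ m) (j : Fin m) : ∃ i : Fin m, i + 2 ≤ (j : ℕ) ∨ j + 2 ≤ (i : ℕ) := by
  rcases lt_or_ge (j : ℕ) 2 with h | h
  · exact ⟨⟨3, by omega⟩, .inr (by simp only; omega)⟩
  · exact ⟨⟨0, by omega⟩, .inl (by simp only; omega)⟩

namespace IsStdCover

variable {Y : Type*} {t : ℕ → Perm Y} {π : Y → Fin (m + 1)}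

theorem exists_isSheetChange (hπ : IsStdCover m t π) (hcard : Nat.card {y // π y = 0} = 2) :
    ∃ e c, (∀ j b, π (e (j, b)) = j) ∧ IsSheetChange t e c := by
  obtain ⟨e, π_e, he⟩ := exists_trivialization hπ.map_apply
  have : Finite {y // π y = 0} := Nat.finite_of_card_ne_zero (by omega)
  let β : Bool ≃ {y // π y = 0} := (Finite.equivFinOfCardEq hcard |>.trans finTwoEquiv).symm
  let f : Fin (m + 1) × Bool ≃ Y := ((Equiv.refl _).prodCongr β).trans e
  have π_f (j b) : π (f (j, b)) = j := π_e j (β b)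
  have exists_sheet (i : Fin m) (j : Fin (m + 1)) (b) :
      ∃ b', t i (f (j, b)) = f (swap i.castSucc i.succ j, b') := by
    obtain ⟨⟨j', b'⟩, h⟩ := f.surjective (t i (f (j, b)))
    obtain rfl : j' = swap i.castSucc i.succ j := by
      rw [← π_f j' b', h, hπ.map_apply, π_f]
    exact ⟨b', h.symm⟩
  choose d hd using exists_sheet
  have d_injective (i j) : Function.Injective (d i j) := fun b b' h ↦ by
    simpa using (hd i j b).trans ((congrArg (fun b ↦ f (_, b)) h).trans (hd i j b').symm)
  have d_eq (i j b) : d i j b = xor b (d i j false) := by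
    have := (d_injective i j).ne (Bool.false_ne_true)
    cases b <;> revert this <;> cases d i j false <;> cases d i j true <;> decide
  refine ⟨f, fun i j ↦ d i j false, π_f, fun i j b ↦ by rw [hd, d_eq], fun i ↦ ?_⟩
  have : f (_, d i i.castSucc false) = f (i.succ, false) :=
    (hd i i.castSucc false).symm.trans (he i (β false))
  exact congrArg Prod.snd (f.injective this)

theorem exists_isTwistedDouble (hπ : IsStdCover m t π) (ht : IsBraidSeq m t) (hm : 4 ≤ m)
    (hcard : Nat.card {y // π y = 0} = 2) :
    ∃ τ ε, IsTwistedDouble τ ε fun i : Fin m ↦ t i := by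
  obtain ⟨e, c, π_e, hc⟩ := hπ.exists_isSheetChange hcard
  have eq_of_fixed {i k : Fin m} {j : Fin (m + 1)} (hi : j ≠ i.castSucc) (hi' : j ≠ i.succ)
      (hk : j ≠ k.castSucc) (hk' : j ≠ k.succ) : c i j = c k j := by
    have := hπ.apply_eq_apply i k (e (j, false)) (by rwa [π_e]) (by rwa [π_e]) (by rwa [π_e])
      (by rwa [π_e])
    rw [hc.apply_eq, hc.apply_eq, swap_apply_of_ne_of_ne hi hi', swap_apply_of_ne_of_ne hk hk']
      at this
    simpa using this
  obtain ⟨τ, hτ⟩ : ∃ τ, ∀ (j : Fin (m + 1)) (i : Fin m), j ≠ i.castSucc → j ≠ i.succ →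
      c i j = τ := by
    refine ⟨c ⟨1, by omega⟩ 0, fun j ↦ ?_⟩
    induction j using Fin.induction with
    | zero =>
      exact fun i hi hi' ↦ eq_of_fixed hi hi' (by simp [Fin.ext_iff]) (by simp [Fin.ext_iff])
    | succ j ih =>
      intro i hi hi'
      obtain ⟨k, hk⟩ := exists_far hm j
      rw [← ih k (by simp [Fin.ext_iff]; omega) (by simp [Fin.ext_iff]; omega),
        ← hc.succ_eq_castSucc ht hk]
      exact eq_of_fixed hi hi' (by simp [Fin.ext_iff]; omega) (by simp [Fin.ext_iff]; omega)
  obtain ⟨ε, hε⟩ : ∃ ε, ∀ k (hk : k < m), c ⟨k, hk⟩ (Fin.succ ⟨k, hk⟩) = ε := by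
    refine ⟨c ⟨0, by omega⟩ (Fin.succ ⟨0, by omega⟩), fun k hk ↦ ?_⟩
    induction k with
    | zero => rfl
    | succ k ih =>
      rw [← ih (by omega), eq_comm]
      refine hc.succ_eq_succ ht rfl ?_
      rw [hτ _ _ (by simp [Fin.ext_iff]) (by simp [Fin.ext_iff]; omega),
        hτ _ _ (by simp [Fin.ext_iff]; omega) (by simp [Fin.ext_iff])]
  refine ⟨τ, ε, e, fun i ⟨j, b⟩ ↦ ?_⟩
  simp only [hc.apply_eq, twistedGen]
  split_ifs with h h'
  · rw [h, hc.apply_castSucc]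
  · rw [h', hε]
  · rw [hτ j i h h']

end IsStdCover

end Lifts

/-! ### Homomorphisms up to conjugacy -/

section Trichotomy

open Equiv

theorem IsCyclicBraid.forall_isCyclicPt_or_exists_sumCongr_or_isTwistedDouble {X : Type*} [Finite X]
    {S : ℤ → Perm X} {δ : Perm X} {m : ℕ} (hS : IsCyclicBraid (m + 1) S δ) (hm : 6 ≤ m)
    (hX : Nat.card X = 2 * (m + 1)) :
    (∀ x, IsCyclicPt S x) ∨
      (∃ (e : Fin (m + 1) ⊕ Fin (m + 1) ≃ X) (w : Perm (Fin (m + 1))),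
        ∀ (i : Fin m) z, S i (e z) = e (sumCongr (swap i.castSucc i.succ) w z)) ∨
      ∃ τ ε, IsTwistedDouble τ ε fun i : Fin m ↦ S i := by
  obtain ⟨t, ht, htS, π, hπ⟩ := hS.exists_isStdCover hm hX.le
  let N := nonCyclicPts S
  have card_N : Nat.card N = (m + 1) * Nat.card {y // π y = 0} :=
    card_eq_mul_card_fiber hπ.map_apply
  have card_fiber : Nat.card {y // π y = 0} ≤ 2 := by
    refine Nat.le_of_mul_le_mul_left ?_ m.succ_pos
    rw [Nat.succ_eq_add_one, ← card_N, mul_comm, ← hX]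
    exact Finite.card_subtype_le _
  obtain h | h | h : Nat.card {y // π y = 0} = 0 ∨ Nat.card {y // π y = 0} = 1 ∨
    Nat.card {y // π y = 0} = 2 := by omega
  · refine .inl fun x ↦ by_contra fun hx ↦ ?_
    rw [h, mul_zero, Finite.card_eq_zero_iff] at card_N
    exact card_N.false ⟨x, hx⟩
  · obtain ⟨e, he⟩ := exists_equiv_fin_of_card_fiber_eq_one hπ.map_apply h
    have card_compl : Nat.card (Nᶜ : Set X) = m + 1 := by
      have := Set.ncard_add_ncard_compl N
      rw [← Nat.card_coe_set_eq, ← Nat.card_coe_set_eq, card_N, h, hX] at this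
      omega
    let f : Fin (m + 1) ≃ (Nᶜ : Set X) := (Finite.equivFinOfCardEq card_compl).symm
    let r : Perm (Nᶜ : Set X) := (S 0).subtypePerm fun x ↦
      not_congr (not_congr (hS.isCyclicPt_apply_iff (by omega) 0))
    classical
    refine .inr (.inl ⟨(sumCongr e f).trans (Equiv.Set.sumCompl N), f.symm.permCongr r, ?_⟩)
    rintro i (j | j)
    · simp [← htS, he]
    · simpa [r] using not_not.1 (f j).2 i 0
  · have bijective : Function.Bijective (Subtype.val : N → X) :=
      Subtype.val_injective.bijective_of_nat_card_le (by rw [card_N, h, hX, mul_comm])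
    obtain ⟨τ, ε, e, he⟩ := hπ.exists_isTwistedDouble ht (by omega) h
    exact .inr (.inr ⟨τ, ε, e.trans (Equiv.ofBijective _ bijective), fun i z ↦ by
      simp [← he, htS]⟩)

end Trichotomy

/-! ### The standard and the Lin homomorphisms -/

section Models

open Equiv

/-- The labelling of `Fin (2 * n)` by two copies of `Fin n` that underlies `dbl`. -/
def sumEquivFin (n : ℕ) : Fin n ⊕ Fin n ≃ Fin (2 * n) :=
  finSumFinEquiv.trans (finCongr (two_mul n).symm)

/-- The labelling of `Fin (2 * n)` by `Fin n × Bool`: the point `j` is `(j, false)` and the point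
`n + j` is `(j, true)`. -/
def prodEquivFin (n : ℕ) : Fin n × Bool ≃ Fin (2 * n) :=
  ((Equiv.prodComm _ _).trans (Equiv.boolProdEquivSum _)).trans (sumEquivFin n)

theorem dbl_apply_sumEquivFin {n : ℕ} (p q : Perm (Fin n)) (z : Fin n ⊕ Fin n) :
    dbl n p q (sumEquivFin n z) = sumEquivFin n (sumCongr p q z) := by
  simp [dbl, sumEquivFin]

theorem tw_apply_prodEquivFin {n : ℕ} (j k : Fin n) (b : Bool) :
    tw n k (prodEquivFin n (j, b)) = prodEquivFin n (j, xor b (k = j)) := by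
  change swap (prodEquivFin n (k, false)) (prodEquivFin n (k, true)) _ = _
  rw [(prodEquivFin n).injective.swap_apply]
  rcases eq_or_ne k j with rfl | h
  · cases b <;> simp
  · rw [swap_apply_of_ne_of_ne] <;> simp [h, h.symm]

theorem prod_map_tw_apply_prodEquivFin {n : ℕ} (p : Fin n → Prop) [DecidablePred p]
    {l : List (Fin n)} (hl : l.Nodup) (j : Fin n) (b : Bool) :
    (l.map fun k ↦ if p k then tw n k else 1).prod (prodEquivFin n (j, b)) =
      prodEquivFin n (j, xor b (j ∈ l ∧ p j)) := by
  induction l with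
  | nil => simp
  | cons k l ih =>
    obtain ⟨hk, hl⟩ := List.nodup_cons.1 hl
    rw [List.map_cons, List.prod_cons, Perm.mul_apply, ih hl]
    rcases eq_or_ne k j with rfl | h
    · split_ifs with hp <;> simp [tw_apply_prodEquivFin, hk, hp]
    · split_ifs with hp <;> simp [tw_apply_prodEquivFin, h, h.symm]

variable {m : ℕ}

theorem lowTw_apply_prodEquivFin (i : Fin m) (j : Fin (m + 1)) (b : Bool) :
    lowTw (m + 1) i (prodEquivFin (m + 1) (j, b)) =
      prodEquivFin (m + 1) (j, xor b ((j : ℕ) < i)) :=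
  (prod_map_tw_apply_prodEquivFin (fun j ↦ (j : ℕ) < i) (List.nodup_finRange _) j b).trans
    (by simp)

theorem highTw_apply_prodEquivFin (i : Fin m) (j : Fin (m + 1)) (b : Bool) :
    highTw (m + 1) i (prodEquivFin (m + 1) (j, b)) =
      prodEquivFin (m + 1) (j, xor b (i + 2 ≤ (j : ℕ))) :=
  (prod_map_tw_apply_prodEquivFin (fun j ↦ i + 2 ≤ (j : ℕ)) (List.nodup_finRange _) j b).trans
    (by simp)

theorem isTwistedDouble_dbl :
    IsTwistedDouble false false fun i : Fin m ↦
      dbl (m + 1) (stdGen (m + 1) i) (stdGen (m + 1) i) := by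
  refine ⟨prodEquivFin (m + 1), fun i ⟨j, b⟩ ↦ ?_⟩
  rw [prodEquivFin, trans_apply, dbl_apply_sumEquivFin]
  cases b <;> simp [twistedGen] <;> rfl

theorem linL1Gen_apply_prodEquivFin (i : Fin m) (j : Fin (m + 1)) (b : Bool) :
    linL1Gen (m + 1) i (prodEquivFin (m + 1) (j, b)) =
      prodEquivFin (m + 1) (swap i.castSucc i.succ j, xor b (j = i.castSucc)) := by
  change (swap (prodEquivFin _ (i.castSucc, false)) (prodEquivFin _ (i.succ, false)) *
    swap (prodEquivFin _ (i.castSucc, false)) (prodEquivFin _ (i.castSucc, true)) *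
    swap (prodEquivFin _ (i.castSucc, false)) (prodEquivFin _ (i.succ, true))) _ = _
  have ne : i.castSucc ≠ i.succ := i.castSucc_lt_succ.ne
  simp only [Perm.mul_apply, (prodEquivFin _).injective.swap_apply]
  rcases eq_or_ne j i.castSucc with rfl | hj
  · cases b <;> simp [swap_apply_def, ne, ne.symm]
  rcases eq_or_ne j i.succ with rfl | hj'
  · cases b <;> simp [swap_apply_def, ne, ne.symm]
  · simp [swap_apply_def, hj, hj']

theorem swap_mul_swap_apply_prodEquivFin (i : Fin m) (j : Fin (m + 1)) (b : Bool) :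
    (swap (prodEquivFin _ (i.castSucc, false)) (prodEquivFin _ (i.succ, true)) *
        swap (prodEquivFin _ (i.succ, false)) (prodEquivFin _ (i.castSucc, true)))
        (prodEquivFin (m + 1) (j, b)) =
      prodEquivFin (m + 1) (swap i.castSucc i.succ j, xor b (j = i.castSucc ∨ j = i.succ)) := by
  have ne : i.castSucc ≠ i.succ := i.castSucc_lt_succ.ne
  simp only [Perm.mul_apply, (prodEquivFin _).injective.swap_apply]
  rcases eq_or_ne j i.castSucc with rfl | hj
  · cases b <;> simp [swap_apply_def, ne, ne.symm]
  rcases eq_or_ne j i.succ with rfl | hj'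
  · cases b <;> simp [swap_apply_def, ne, ne.symm]
  · simp [swap_apply_def, hj, hj']

theorem lowTw_mul_mul_highTw_apply_prodEquivFin {i : Fin m} {p : Perm (Fin (2 * (m + 1)))}
    {c : Fin (m + 1) → Bool} (hp : ∀ j b, p (prodEquivFin (m + 1) (j, b)) =
      prodEquivFin (m + 1) (swap i.castSucc i.succ j, xor b (c j))) (j : Fin (m + 1)) (b : Bool) :
    (lowTw (m + 1) i * p * highTw (m + 1) i) (prodEquivFin (m + 1) (j, b)) =
      prodEquivFin (m + 1) (swap i.castSucc i.succ j,
        xor b (if j = i.castSucc ∨ j = i.succ then c j else !c j)) := by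
  rw [Perm.mul_apply, Perm.mul_apply, highTw_apply_prodEquivFin, hp, lowTw_apply_prodEquivFin]
  congr 2
  rcases eq_or_ne j i.castSucc with rfl | hj
  · simp
  rcases eq_or_ne j i.succ with rfl | hj'
  · simp
  have hj_val : (j : ℕ) ≠ i := fun h ↦ hj (Fin.ext h)
  have hj_val' : (j : ℕ) ≠ i + 1 := fun h ↦ hj' (Fin.ext h)
  rw [swap_apply_of_ne_of_ne hj hj']
  rcases lt_or_gt_of_ne hj_val with h | h
  · simp [hj, hj', h, show ¬ i + 2 ≤ (j : ℕ) by omega]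
  · simp [hj, hj', h.not_gt, show i + 2 ≤ (j : ℕ) by omega]

-- Relabelling the sheets over `j` by the parity of `j` makes the step `i → i + 1` preserve sheets.
theorem isTwistedDouble_of_apply_prodEquivFin {τ ε : Bool} {s : Fin m → Perm (Fin (2 * (m + 1)))}
    (hs : ∀ i j b, s i (prodEquivFin (m + 1) (j, b)) =
      prodEquivFin (m + 1) (swap i.castSucc i.succ j,
        xor b (if j = i.castSucc then true else if j = i.succ then !ε else τ))) :
    IsTwistedDouble τ ε s := by
  have involutive (j : Fin (m + 1)) : Function.Involutive (xor (j : ℕ).bodd) :=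
    fun b ↦ Bool.bne_self_left _ b
  refine ⟨(prodShear (Equiv.refl (Fin (m + 1))) fun j ↦ (involutive j).toPerm).trans
    (prodEquivFin (m + 1)), fun i ⟨j, b⟩ ↦ (hs i j _).trans (congrArg _ ?_)⟩
  rcases eq_or_ne j i.castSucc with rfl | hj
  · simp [twistedGen]
  rcases eq_or_ne j i.succ with rfl | hj'
  · simp [twistedGen, hj]
  · simp [twistedGen, hj, hj', swap_apply_of_ne_of_ne]

theorem isTwistedDouble_linL1Gen :
    IsTwistedDouble false true fun i : Fin m ↦ linL1Gen (m + 1) i :=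
  isTwistedDouble_of_apply_prodEquivFin fun i j b ↦ by
    simp [linL1Gen_apply_prodEquivFin]

theorem isTwistedDouble_linL2Gen :
    IsTwistedDouble true true fun i : Fin m ↦ linL2Gen (m + 1) i :=
  isTwistedDouble_of_apply_prodEquivFin fun i j b ↦ by
    rw [linL2Gen, lowTw_mul_mul_highTw_apply_prodEquivFin (linL1Gen_apply_prodEquivFin i)]
    grind

theorem isTwistedDouble_linL3Gen :
    IsTwistedDouble true false fun i : Fin m ↦ linL3Gen (m + 1) i :=
  isTwistedDouble_of_apply_prodEquivFin fun i j b ↦ by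
    refine (lowTw_mul_mul_highTw_apply_prodEquivFin (swap_mul_swap_apply_prodEquivFin i) j b).trans
      ?_
    grind

theorem exists_conj_dbl {s : Fin m → Perm (Fin (2 * (m + 1)))} {w : Perm (Fin (m + 1))}
    {e : Fin (m + 1) ⊕ Fin (m + 1) ≃ Fin (2 * (m + 1))}
    (hs : ∀ i z, s i (e z) = e (sumCongr (swap i.castSucc i.succ) w z)) :
    ∃ u : Perm (Fin (2 * (m + 1))), ∀ i, s i = u * dbl (m + 1) (stdGen (m + 1) i) w * u⁻¹ := by
  refine ⟨(sumEquivFin (m + 1)).symm.trans e, fun i ↦ ?_⟩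
  refine eq_mul_inv_iff_mul_eq.2 (Equiv.ext fun x ↦ ?_)
  obtain ⟨z, rfl⟩ := (sumEquivFin (m + 1)).surjective x
  simp only [Perm.mul_apply, trans_apply, dbl_apply_sumEquivFin, symm_apply_apply]
  exact hs i z

theorem IsTwistedDouble.exists_conj_dbl_or_lin {τ ε : Bool} {s : Fin m → Perm (Fin (2 * (m + 1)))}
    (hs : IsTwistedDouble τ ε s) :
    (∃ u : Perm (Fin (2 * (m + 1))), ∀ i,
        s i = u * dbl (m + 1) (stdGen (m + 1) i) (stdGen (m + 1) i) * u⁻¹) ∨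
      (∃ u : Perm (Fin (2 * (m + 1))), ∀ i, s i = u * linL1Gen (m + 1) i * u⁻¹) ∨
      (∃ u : Perm (Fin (2 * (m + 1))), ∀ i, s i = u * linL2Gen (m + 1) i * u⁻¹) ∨
      (∃ u : Perm (Fin (2 * (m + 1))), ∀ i, s i = u * linL3Gen (m + 1) i * u⁻¹) :=
  match τ, ε with
  | false, false => .inl (hs.exists_conj isTwistedDouble_dbl)
  | false, true => .inr (.inl (hs.exists_conj isTwistedDouble_linL1Gen))
  | true, true => .inr (.inr (.inl (hs.exists_conj isTwistedDouble_linL2Gen)))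
  | true, false => .inr (.inr (.inr (hs.exists_conj isTwistedDouble_linL3Gen)))

end Models

namespace BraidGroup

variable {n : ℕ}

theorem commute_σ {i j : Fin (n - 1)} (h : (i : ℕ) + 2 ≤ j) : Commute (σ (n := n) i) (σ j) :=
  mul_inv_eq_one.1 (PresentedGroup.one_of_mem (rels := braidRels n) (.inl ⟨i, j, .inl h, rfl⟩))

theorem σ_mul_σ_mul_σ {i j : Fin (n - 1)} (h : (j : ℕ) = i + 1) :
    σ (n := n) i * σ j * σ i = σ j * σ i * σ j :=
  mul_inv_eq_one.1 (PresentedGroup.one_of_mem (rels := braidRels n) (.inr ⟨i, j, h, rfl⟩))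

theorem isBraidSeq_σ :
    IsBraidSeq (n - 1) fun k ↦ if hk : k < n - 1 then σ (n := n) ⟨k, hk⟩ else 1 := by
  refine ⟨fun i j hij hj ↦ ?_, fun i hi ↦ ?_⟩
  · simpa only [dif_pos hj, dif_pos (show i < n - 1 by omega)] using commute_σ hij
  · simpa only [dif_pos hi, dif_pos (Nat.lt_of_succ_lt hi)] using σ_mul_σ_mul_σ rfl

end BraidGroup

/-- Corollary 7. Let `n ≥ 7` and let `ψ : B_n → Sym_{2n}` be any
homomorphism. Then `ψ` is cyclic, or conjugate to `ρ_S × cycl_w` for some `w ∈ Sym_n`,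
or conjugate to `ρ_S × ρ_S`, or conjugate to a Lin homomorphism `ρ_{Lj}`, `j ∈ {1,2,3}`. -/
theorem hom_to_sym2n_classification (n : ℕ) (hn : 7 ≤ n)
    (ψ : BraidGroup n →* Equiv.Perm (Fin (2 * n))) :
    IsCyclicHom ψ ∨
      (∃ u : Equiv.Perm (Fin (2 * n)), ∃ w : Equiv.Perm (Fin n),
        ∀ i : Fin (n - 1), ψ (σ i) = u * dbl n (stdGen n i) w * u⁻¹) ∨
      (∃ u : Equiv.Perm (Fin (2 * n)),
        ∀ i : Fin (n - 1), ψ (σ i) = u * dbl n (stdGen n i) (stdGen n i) * u⁻¹) ∨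
      (∃ u : Equiv.Perm (Fin (2 * n)), ∀ i : Fin (n - 1), ψ (σ i) = u * linL1Gen n i * u⁻¹) ∨
      (∃ u : Equiv.Perm (Fin (2 * n)), ∀ i : Fin (n - 1), ψ (σ i) = u * linL2Gen n i * u⁻¹) ∨
      (∃ u : Equiv.Perm (Fin (2 * n)), ∀ i : Fin (n - 1), ψ (σ i) = u * linL3Gen n i * u⁻¹) := by
  obtain ⟨m, rfl⟩ : ∃ m, n = m + 1 := ⟨n - 1, by omega⟩
  obtain ⟨S, δ, hS, hSψ⟩ := IsBraidSeq.exists_isCyclicBraid (n := m + 1) (by omega)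
    (BraidGroup.isBraidSeq_σ.map ψ)
  have map_σ (i : Fin m) : ψ (σ i) = S i :=
    (congrArg ψ (dif_pos i.isLt)).symm.trans (hSψ i i.isLt).symm
  obtain h | ⟨e, w, h⟩ | ⟨τ, ε, h⟩ :=
    hS.forall_isCyclicPt_or_exists_sumCongr_or_isTwistedDouble (by omega) (Nat.card_fin _)
  · exact .inl fun i j ↦ Equiv.ext fun x ↦ by rw [map_σ, map_σ, h x]
  · simp only [← map_σ] at h
    obtain ⟨u, hu⟩ := exists_conj_dbl h
    exact .inr (.inl ⟨u, w, hu⟩)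
  · simp only [← map_σ] at h
    exact .inr (.inr h.exists_conj_dbl_or_lin)
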